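/- Let K(t) = t^{α−1}/Γ(α) with α ∈ (1/2,1), σ > 0, β < 0, and let X be the fractional Volterra Ornstein–Uhlenbeck process. Define m₁(T) = (1/T)∫_{[0,T)} X_t τ(dt), m₂(T) = (1/T)∫_{[0,T)} X_t² τ(dt), and the method-of-moments estimators b̂_T = m₁(T) (C_α σ² / (m₂(T) − m₁(T)²))^{α/(2α−1)} and β̂_T = −(C_α σ² / (m₂(T) − m₁(T)²))^{α/(2α−1)}. Then (b̂_T, β̂_T) is consistent in probability locally uniformly: for every ε > 0 and every compact Θ ⊂ ℝ × (−∞,0), lim_{T→∞} sup_{(b,β)∈Θ} ℙ[|(b̂_T, β̂_T) − (b,β)| > ε] = 0. Furthermore, if (T_n)_{n≥1} satisfies T_n ↗ ∞ and Σ_{n=1}^∞ |1 − T_n/T_{n+1}|^p < ∞ for some p ∈ [1,∞), then (b̂_{T_n}, β̂_{T_n}) is strongly consistent. -/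

import Mathlib

open MeasureTheory Set Filter
open scoped ENNReal NNReal Topology

noncomputable section

/-- A scalar kernel is completely monotone: `C^∞` on `(0,∞)` with
`(-1)^n K^{(n)}(t) ≥ 0` for all `n` and `t > 0`. -/
def CompletelyMonotoneFn (K : ℝ → ℝ) : Prop :=
  ContDiffOn ℝ (⊤ : ℕ∞) K (Set.Ioi 0) ∧
  ∀ (n : ℕ) (t : ℝ), 0 < t → 0 ≤ (-1 : ℝ) ^ n * iteratedDerivWithin n K (Set.Ioi 0) t

/-- Assumption (VOU) on the kernel: `0 ≤ K ∈ L²_loc(ℝ₊)` completely monotone, and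
there is `γ ∈ (0,1]` with
`sup_{0 ≤ t-s ≤ 1} (t-s)^{-2γ}(∫_s^t K(r)² dr + ∫₀^∞ (K((t-s)+r)-K(r))² dr) < ∞`. -/
def AssumptionVOUKernel (K : ℝ → ℝ) (γ : ℝ) : Prop :=
  (∀ t > (0:ℝ), 0 ≤ K t) ∧ CompletelyMonotoneFn K ∧
  (∀ T > (0:ℝ), IntervalIntegrable (fun t => (K t) ^ 2) volume 0 T) ∧
  γ ∈ Set.Ioc (0:ℝ) 1 ∧
  ∃ Cγ : ℝ, ∀ s t : ℝ, 0 ≤ s → s ≤ t → t - s ≤ 1 →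
    IntegrableOn (fun r => (K ((t - s) + r) - K r) ^ 2) (Set.Ioi 0) ∧
    (∫ r in s..t, (K r) ^ 2) + (∫ r in Set.Ioi (0:ℝ), (K ((t - s) + r) - K r) ^ 2) ≤
      Cγ * (t - s) ^ (2 * γ)

/-- `E_β ∈ L²_loc(ℝ₊)` solves the linear Volterra equation
`E_β(t) = K(t) + ∫₀ᵗ K(t-s) β E_β(s) ds`. -/
def SolvesResolventEq (K : ℝ → ℝ) (β : ℝ) (E : ℝ → ℝ) : Prop :=
  (∀ T > (0:ℝ), IntervalIntegrable (fun t => (E t) ^ 2) volume 0 T) ∧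
  ∀ t > (0:ℝ), E t = K t + ∫ s in (0:ℝ)..t, K (t - s) * (β * E s)

/-- `‖K‖_{L¹(ℝ₊)} = ∫₀^∞ K(t) dt ∈ [0,∞]`. -/
noncomputable def normL1 (K : ℝ → ℝ) : ℝ≥0∞ :=
  ∫⁻ t in Set.Ioi (0:ℝ), ENNReal.ofReal (K t)

/-- The mean `𝔼[X_t] = (1 + β∫₀ᵗ E_β)x₀ + (∫₀ᵗ E_β) b` of the VOU process. -/
noncomputable def meanVOU (E : ℝ → ℝ → ℝ) (x₀ b β t : ℝ) : ℝ :=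
  (1 + β * ∫ s in (0:ℝ)..t, E β s) * x₀ + (∫ s in (0:ℝ)..t, E β s) * b

/-- The limit mean `m₁(b,β) = x₀/(1 + ‖K‖_{L¹}|β|) + b/|β|` (with `1/∞ = 0`). -/
noncomputable def m1VOU (K : ℝ → ℝ) (x₀ b β : ℝ) : ℝ :=
  x₀ * ((1 + normL1 K * ENNReal.ofReal |β|)⁻¹).toReal + b / |β|

/-- Covariance of the VOU process: `cov(X_t, X_s) = σ²∫₀^{s∧t} E_β(|t-s|+r)E_β(r) dr`. -/
noncomputable def covVOU (E : ℝ → ℝ → ℝ) (σ β s t : ℝ) : ℝ :=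
  σ ^ 2 * ∫ r in (0:ℝ)..(min s t), E β (|t - s| + r) * E β r

/-- Covariance of the stationary VOU process:
`cov(X^stat_t, X^stat_s) = σ²∫₀^∞ E_β(|t-s|+r)E_β(r) dr`. -/
noncomputable def covStatVOU (E : ℝ → ℝ → ℝ) (σ β s t : ℝ) : ℝ :=
  σ ^ 2 * ∫ r in Set.Ioi (0:ℝ), E β (|t - s| + r) * E β r

/-- `X` is a Gaussian process (over times in `S`) with mean function `m` and
covariance function `c`: every finite linear combination is Gaussian. -/
def IsGaussianProcessOn {Ω : Type*} [MeasurableSpace Ω] (P : Measure Ω) (S : Set ℝ)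
    (X : ℝ → Ω → ℝ) (m : ℝ → ℝ) (c : ℝ → ℝ → ℝ) : Prop :=
  (∀ t, Measurable (X t)) ∧
  ∀ (n : ℕ) (t : Fin n → ℝ) (a : Fin n → ℝ), (∀ i, t i ∈ S) →
    Measure.map (fun ω => ∑ i, a i * X (t i) ω) P =
      ProbabilityTheory.gaussianReal (∑ i, a i * m (t i))
        (Real.toNNReal (∑ i, ∑ j, a i * a j * c (t i) (t j)))

/-- The limiting variance `m_var(β) = σ²∫₀^∞ E_β(r)² dr`. -/
noncomputable def mvarVOU (E : ℝ → ℝ → ℝ) (σ β : ℝ) : ℝ :=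
  σ ^ 2 * ∫ r in Set.Ioi (0:ℝ), (E β r) ^ 2

/-- The limiting Gaussian distribution `π_{b,β} = 𝒩(m₁(b,β), m_var(β))`. -/
noncomputable def piVOU (K : ℝ → ℝ) (E : ℝ → ℝ → ℝ) (x₀ σ b β : ℝ) : Measure ℝ :=
  ProbabilityTheory.gaussianReal (m1VOU K x₀ b β) (Real.toNNReal (mvarVOU E σ β))

/-- The fractional Riemann–Liouville kernel `K_α(t) = t^{α-1}/Γ(α)`. -/
noncomputable def fractionalKernel (α t : ℝ) : ℝ := t ^ (α - 1) / Real.Gamma α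

/-- `C_α = (1/π)∫₀^∞ du/(1 + 2u^α cos(πα/2) + u^{2α})`. -/
noncomputable def Calpha (α : ℝ) : ℝ :=
  (1 / Real.pi) * ∫ u in Set.Ioi (0:ℝ),
    1 / (1 + 2 * u ^ α * Real.cos (Real.pi * α / 2) + u ^ (2 * α))

/-!
The fractional kernel is positive, non-increasing and log-convex, so for `β < 0` the resolvent `E_β`
is non-negative with `∫₀^∞ E_β = 1 / |β|`. The mean therefore converges to `b / |β|`, and the
covariance of `X_s` and `X_t` is dominated by the autocorrelation `σ² ∫ E_β(|t - s| + r) E_β(r) dr`,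
which is integrable in `t - s` with total mass `σ² / β²`; by Isserlis' formula the covariance of
`X_s²` and `X_t²` is dominated by a multiple of it. Hence the variances of the time averages of `X`
and `X²` over `[0, T]` are `O(1 / T)` locally uniformly in `(b, β)`, which gives convergence of the
empirical moments in probability and, along `T = n²`, almost surely; monotonicity in `T` of the
integral of a non-negative path fills the gaps between consecutive squares. By Plancherel's theorem
the limiting variance is `σ² C_α |β|^{1/α - 2}`, so that the estimator is a continuous left inverse
of the stationary moments.
-/

section SquareIntegrable

lemma continuous_integral_inner_comp_add {F 𝕜 : Type*} [RCLike 𝕜] [NormedAddCommGroup F]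
    [InnerProductSpace 𝕜 F] {f g : ℝ → F} (hf : MemLp f 2) (hg : MemLp g 2) :
    Continuous fun x : ℝ ↦ ∫ r, inner 𝕜 (f r) (g (x + r)) := by
  have : Fact ((2 : ℝ≥0∞) ≠ ∞) := ⟨ENNReal.ofNat_ne_top⟩
  have h_translate : Continuous fun x : ℝ ↦ DomAddAct.mk x +ᵥ hg.toLp g :=
    DomAddAct.continuous_mk.vadd continuous_const
  refine ((continuous_const (y := hf.toLp f)).inner (𝕜 := 𝕜) h_translate).congr fun x ↦ ?_
  rw [DomAddAct.mk_vadd_toLp, L2.inner_def]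
  refine integral_congr_ae ?_
  filter_upwards [hf.coeFn_toLp,
    (hg.comp_measurePreserving (measurePreserving_vadd x volume)).coeFn_toLp] with r hr hr'
  exact congrArg₂ _ hr hr'

/-- Square integrability on every bounded interval `(0, T]`, the regularity class `L²_loc(ℝ₊)` of
the kernels and resolvents. -/
def LocSqIntegrable (f : ℝ → ℝ) : Prop :=
  ∀ T, MemLp f 2 (volume.restrict (Ioc 0 T))

namespace LocSqIntegrable

variable {f g : ℝ → ℝ}

lemma integrableOn (hf : LocSqIntegrable f) (T : ℝ) : IntegrableOn f (Ioc 0 T) :=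
  (hf T).integrable one_le_two

lemma intervalIntegrable (hf : LocSqIntegrable f) {a b : ℝ} (ha : 0 ≤ a) (hb : 0 ≤ b) :
    IntervalIntegrable f volume a b := by
  rw [intervalIntegrable_iff]
  exact (hf.integrableOn (max a b)).mono_set (Ioc_subset_Ioc_left (le_min ha hb))

lemma memLp_indicator (hf : LocSqIntegrable f) (T : ℝ) : MemLp ((Ioc 0 T).indicator f) 2 :=
  (memLp_indicator_iff_restrict measurableSet_Ioc).2 (hf T)

lemma memLp_comp_sub (hf : LocSqIntegrable f) (t : ℝ) :
    MemLp (fun s ↦ f (t - s)) 2 (volume.restrict (Ioc 0 t)) := by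
  have h_map := ((memLp_indicator_iff_restrict measurableSet_Ioc).2
    (hf t)).comp_measurePreserving (Measure.measurePreserving_sub_left volume t)
  rw [← restrict_Ioo_eq_restrict_Ioc]
  refine (memLp_congr_ae ?_).1 (h_map.restrict (Ioo 0 t))
  filter_upwards [ae_restrict_mem measurableSet_Ioo] with s hs
  exact indicator_of_mem (show t - s ∈ Ioc 0 t from ⟨by linarith [hs.2], by linarith [hs.1]⟩) f

lemma integrableOn_comp_sub_mul (hf : LocSqIntegrable f) (hg : LocSqIntegrable g) (t : ℝ) :
    IntegrableOn (fun s ↦ f (t - s) * g s) (Ioc 0 t) :=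
  (hf.memLp_comp_sub t).integrable_mul (hg t)

lemma intervalIntegrable_comp_sub_mul (hf : LocSqIntegrable f) (hg : LocSqIntegrable g) {t : ℝ}
    (ht : 0 ≤ t) : IntervalIntegrable (fun s ↦ f (t - s) * g s) volume 0 t :=
  (intervalIntegrable_iff_integrableOn_Ioc_of_le ht).2 (hf.integrableOn_comp_sub_mul hg t)

lemma integral_comp_sub_mul_eq_integral_inner {t T : ℝ} (ht : 0 ≤ t) (htT : t ≤ T) :
    ∫ s in (0 : ℝ)..t, f (t - s) * g s =
      ∫ r, inner ℝ ((Ioc 0 T).indicator g (-r)) ((Ioc 0 T).indicator f (t + r)) := by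
  rw [← integral_neg_eq_self, intervalIntegral.integral_of_le ht, integral_Ioc_eq_integral_Ioo,
    ← integral_indicator measurableSet_Ioo]
  congr 1 with s
  by_cases h : s ∈ Ioo 0 t
  · have hs : s ∈ Ioc 0 T := ⟨h.1, h.2.le.trans htT⟩
    rw [indicator_of_mem h, neg_neg, indicator_of_mem hs, indicator_of_mem]
    · rfl
    · exact ⟨by linarith [h.2], by linarith [h.1]⟩
  · rw [indicator_of_notMem h, neg_neg]
    by_cases hs0 : 0 < s
    · rw [indicator_of_notMem (a := t + -s), inner_zero_right]
      exact fun hts ↦ h ⟨hs0, by linarith [hts.1]⟩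
    · rw [indicator_of_notMem fun hs' ↦ hs0 hs'.1, inner_zero_left]

lemma continuousOn_integral_comp_sub_mul (hf : LocSqIntegrable f) (hg : LocSqIntegrable g) :
    ContinuousOn (fun t ↦ ∫ s in (0 : ℝ)..t, f (t - s) * g s) (Ici 0) := by
  intro t ht
  have h_cont := continuous_integral_inner_comp_add (𝕜 := ℝ)
    ((hg.memLp_indicator (t + 1)).comp_measurePreserving (Measure.measurePreserving_neg volume))
    (hf.memLp_indicator (t + 1))
  refine (h_cont.continuousWithinAt (s := Ici 0) (x := t)).congr_of_eventuallyEq ?_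
    (integral_comp_sub_mul_eq_integral_inner ht (by linarith))
  filter_upwards [self_mem_nhdsWithin,
    mem_nhdsWithin_of_mem_nhds (Iio_mem_nhds (lt_add_one t))] with u hu hut
  exact integral_comp_sub_mul_eq_integral_inner hu (le_of_lt hut)

end LocSqIntegrable

end SquareIntegrable

section Volterra

lemma integral_integral_comp_sub_mul {f g : ℝ → ℝ} {t : ℝ} (ht : 0 ≤ t)
    (hf : IntegrableOn f (Ioc 0 t)) (hg : IntegrableOn g (Ioc 0 t)) :
    ∫ u in (0 : ℝ)..t, ∫ s in (0 : ℝ)..u, f (u - s) * g s =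
      ∫ s in (0 : ℝ)..t, (∫ u in (0 : ℝ)..(t - s), f u) * g s := by
  have h_int : Integrable (fun p : ℝ × ℝ ↦
      (Ioc 0 t).indicator g p.2 * (Ioc 0 t).indicator f (p.1 - p.2)) :=
    (hg.integrable_indicator measurableSet_Ioc).convolution_integrand (ContinuousLinearMap.mul ℝ ℝ)
      (hf.integrable_indicator measurableSet_Ioc)
  have h_swap := integral_integral_swap (μ := volume.restrict (Ioc 0 t)) (ν := volume)
    (f := fun u s ↦ (Ioc 0 t).indicator g s * (Ioc 0 t).indicator f (u - s))
    (h_int.mono_measure (Measure.prod_mono Measure.restrict_le_self le_rfl))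
  rw [intervalIntegral.integral_of_le ht, intervalIntegral.integral_of_le ht]
  refine Eq.trans ?_ (h_swap.trans ?_)
  · refine setIntegral_congr_fun measurableSet_Ioc fun u hu ↦ ?_
    rw [intervalIntegral.integral_of_le hu.1.le, integral_Ioc_eq_integral_Ioo,
      ← integral_indicator measurableSet_Ioo]
    congr 1 with s
    by_cases h : s ∈ Ioo 0 u
    · rw [indicator_of_mem h, indicator_of_mem, indicator_of_mem, mul_comm]
      · exact ⟨by linarith [h.2], by linarith [h.1, hu.2]⟩
      · exact ⟨h.1, h.2.le.trans hu.2⟩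
    · rw [indicator_of_notMem h]
      by_cases hs : 0 < s
      · rw [indicator_of_notMem (a := u - s), mul_zero]
        exact fun hus ↦ h ⟨hs, by linarith [hus.1]⟩
      · rw [indicator_of_notMem fun hs' ↦ hs hs'.1, zero_mul]
  · rw [← integral_indicator measurableSet_Ioc]
    congr 1 with s
    by_cases h : s ∈ Ioc 0 t
    · have h_shift : ∫ u in Ioc 0 t, (Ioc 0 t).indicator f (u - s) =
          ∫ u in (0 : ℝ)..(t - s), f u := by
        rw [← intervalIntegral.integral_of_le ht,
          intervalIntegral.integral_comp_sub_right ((Ioc 0 t).indicator f),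
          intervalIntegral.integral_of_le (by linarith), setIntegral_indicator measurableSet_Ioc,
          intervalIntegral.integral_of_le (by linarith [h.2]), Ioc_inter_Ioc]
        congr 3
        · exact max_eq_right (by linarith [h.1])
        · exact min_eq_left (by linarith [h.1])
      rw [indicator_of_mem h, indicator_of_mem h, integral_const_mul, h_shift, mul_comm]
    · simp only [indicator_of_notMem h, zero_mul, integral_zero]

/-- The Volterra kernels for which the resolvent is analysed: positive, non-increasing and
log-convex on `(0, ∞)`, locally square integrable at the possible singularity `0`, and not
integrable at infinity. Log-convexity is encoded by saying that `t ↦ K (t + h) / K t` is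
non-decreasing. -/
structure IsVolterraKernel (K : ℝ → ℝ) : Prop where
  continuousOn : ContinuousOn K (Ioi 0)
  pos : ∀ t, 0 < t → 0 < K t
  antitoneOn : AntitoneOn K (Ioi 0)
  locSqIntegrable : LocSqIntegrable K
  add_mul_le_add_mul : ∀ u t h, 0 < u → u ≤ t → 0 ≤ h → K (u + h) * K t ≤ K (t + h) * K u
  tendsto_integral : Tendsto (fun t ↦ ∫ s in (0 : ℝ)..t, K s) atTop atTop

namespace SolvesResolventEq

variable {K E : ℝ → ℝ} {β : ℝ}

lemma aestronglyMeasurable_of_intervalIntegrable (hK : IsVolterraKernel K) (hβ : β ≠ 0) {t : ℝ}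
    (h_int : IntervalIntegrable (fun s ↦ K (t - s) * (β * E s)) volume 0 t) :
    AEStronglyMeasurable E (volume.restrict (Ioc 0 t)) := by
  have hm := h_int.1.aestronglyMeasurable.aemeasurable
  have hKm := (hK.locSqIntegrable.memLp_comp_sub t).1.aemeasurable.mul_const β
  rw [← restrict_Ioo_eq_restrict_Ioc] at hm hKm ⊢
  refine ((hKm.inv.mul hm).congr ?_).aestronglyMeasurable
  filter_upwards [ae_restrict_mem measurableSet_Ioo] with s hs
  have hne : K (t - s) ≠ 0 := (hK.pos _ (sub_pos.2 hs.2)).ne'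
  simp only [Pi.mul_apply, Pi.inv_apply]
  field_simp

-- The equation itself only makes `E` measurable up to each time at which the convolution integral
-- is meaningful; past such times the integral has the junk value `0` and `E` agrees with `K`.
lemma aestronglyMeasurable (hE : SolvesResolventEq K β E) (hK : IsVolterraKernel K) (hβ : β ≠ 0) :
    AEStronglyMeasurable E (volume.restrict (Ioi 0)) := by
  set S : Set ℝ := {t | AEStronglyMeasurable E (volume.restrict (Ioc 0 t))}
  set U : Set ℝ := ⋃ q : {q : ℚ // (q : ℝ) ∈ S}, Ioc (0 : ℝ) q
  have hU : AEStronglyMeasurable E (volume.restrict U) :=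
    aestronglyMeasurable_iUnion_iff.2 fun q ↦ q.2
  have hUm : MeasurableSet U := .iUnion fun _ ↦ measurableSet_Ioc
  have h_subsingleton : ((Ioi 0 \ U) ∩ S).Subsingleton := by
    rintro x ⟨⟨hx0, hxU⟩, hxS⟩ y ⟨⟨hy0, hyU⟩, hyS⟩
    have h_le : ∀ {x y : ℝ}, x ∈ Ioi 0 → x ∉ U → y ∈ S → y ≤ x := fun {x y} hx0 hxU hyS ↦ by
      by_contra! hxy
      obtain ⟨q, hxq, hqy⟩ := exists_rat_btwn hxy
      have hqS : (q : ℝ) ∈ S := hyS.mono_set (Ioc_subset_Ioc_right hqy.le)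
      exact hxU (mem_iUnion.2 ⟨⟨q, hqS⟩, hx0, hxq.le⟩)
    exact le_antisymm (h_le hy0 hyU hxS) (h_le hx0 hxU hyS)
  have h_eq : ∀ᵐ t ∂volume.restrict (Ioi 0 \ U), K t = E t := by
    filter_upwards [ae_restrict_mem (measurableSet_Ioi.diff hUm),
      ae_restrict_of_ae (compl_mem_ae_iff.2 (h_subsingleton.measure_zero volume))] with t ht htS
    rw [hE.2 t ht.1, intervalIntegral.integral_undef, add_zero]
    exact fun h ↦ htS ⟨ht, aestronglyMeasurable_of_intervalIntegrable hK hβ h⟩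
  have h_compl := ((hK.continuousOn.aestronglyMeasurable measurableSet_Ioi).mono_set
    sdiff_subset).congr h_eq
  exact ((aestronglyMeasurable_union_iff).2 ⟨hU, h_compl⟩).mono_set
    (by rw [union_sdiff_self]; exact subset_union_right)

lemma locSqIntegrable (hE : SolvesResolventEq K β E) (hK : IsVolterraKernel K) (hβ : β ≠ 0) :
    LocSqIntegrable E := by
  intro T
  rcases le_or_gt T 0 with hT | hT
  · simp [Ioc_eq_empty (not_lt.2 hT)]
  · exact (memLp_two_iff_integrable_sq
      ((hE.aestronglyMeasurable hK hβ).mono_set Ioc_subset_Ioi_self)).2 (hE.1 T hT).1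

lemma eq_add_mul (hE : SolvesResolventEq K β E) {t : ℝ} (ht : 0 < t) :
    E t = K t + β * ∫ s in (0 : ℝ)..t, K (t - s) * E s := by
  rw [hE.2 t ht, ← intervalIntegral.integral_const_mul]
  simp only [mul_left_comm]

lemma continuousOn (hE : SolvesResolventEq K β E) (hK : IsVolterraKernel K) (hβ : β ≠ 0) :
    ContinuousOn E (Ioi 0) := by
  have h_conv := hK.locSqIntegrable.continuousOn_integral_comp_sub_mul (hE.locSqIntegrable hK hβ)
  exact (hK.continuousOn.add ((h_conv.mono Ioi_subset_Ici_self).const_smul β)).congr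
    fun t ht ↦ hE.eq_add_mul ht

lemma exists_forall_lt_pos (hE : SolvesResolventEq K β E) (hK : IsVolterraKernel K) (hβ : β ≠ 0) :
    ∃ δ > 0, ∀ t, 0 < t → t < δ → 0 < E t := by
  have h_conv : Tendsto (fun t ↦ β * ∫ s in (0 : ℝ)..t, K (t - s) * E s) (𝓝[>] 0) (𝓝 0) := by
    have h := ((hK.locSqIntegrable.continuousOn_integral_comp_sub_mul
      (hE.locSqIntegrable hK hβ)) 0 self_mem_Ici).mono_left (nhdsWithin_mono 0 Ioi_subset_Ici_self)
    simpa only [intervalIntegral.integral_same, mul_zero] using h.const_mul β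
  have h_ev := h_conv.eventually (lt_mem_nhds (neg_lt_zero.2 (hK.pos 1 one_pos)))
  obtain ⟨δ, hδ, h_lt⟩ := mem_nhdsGT_iff_exists_Ioo_subset.1 h_ev
  refine ⟨min δ 1, lt_min hδ one_pos, fun t ht htδ ↦ ?_⟩
  have h_conv_t : -K 1 < _ := h_lt ⟨ht, htδ.trans_le (min_le_left _ _)⟩
  have h_anti : K 1 ≤ K t :=
    hK.antitoneOn ht (mem_Ioi.2 one_pos) (htδ.le.trans (min_le_right _ _))
  rw [hE.eq_add_mul ht]
  linarith

-- Log-convexity lets the memory term at time `t` be compared with the one at time `t₀`.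
lemma mul_le_mul_integral_of_nonpos (hE : SolvesResolventEq K β E) (hK : IsVolterraKernel K)
    (hβ : β < 0) {t t₀ : ℝ} (ht : 0 < t) (htt₀ : t < t₀) (h_nonneg : ∀ s, 0 < s → s < t₀ → 0 ≤ E s)
    (h_nonpos : E t₀ ≤ 0) :
    E t * K t₀ ≤ -β * K t * ∫ s in t..t₀, K (t₀ - s) * E s := by
  have hLE := hE.locSqIntegrable hK hβ.ne
  have h_int := hK.locSqIntegrable.intervalIntegrable_comp_sub_mul hLE (ht.trans htt₀).le
  have h_int_left := h_int.mono_set (by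
    rw [uIcc_of_le ht.le, uIcc_of_le (ht.trans htt₀).le]; exact Icc_subset_Icc_right htt₀.le :
    uIcc 0 t ⊆ uIcc 0 t₀)
  have h_int_right := h_int.mono_set (by
    rw [uIcc_of_le htt₀.le, uIcc_of_le (ht.trans htt₀).le]; exact Icc_subset_Icc_left ht.le :
    uIcc t t₀ ⊆ uIcc 0 t₀)
  have h_memory : (∫ s in (0 : ℝ)..t, K (t₀ - s) * E s) * K t ≤
      (∫ s in (0 : ℝ)..t, K (t - s) * E s) * K t₀ := by
    rw [← intervalIntegral.integral_mul_const, ← intervalIntegral.integral_mul_const]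
    refine intervalIntegral.integral_mono_on_of_le_Ioo ht.le (h_int_left.mul_const _)
      ((hK.locSqIntegrable.intervalIntegrable_comp_sub_mul hLE ht.le).mul_const _) fun s hs ↦ ?_
    have h_log := hK.add_mul_le_add_mul (t - s) t (t₀ - t) (sub_pos.2 hs.2)
      (sub_le_self _ hs.1.le) (sub_nonneg.2 htt₀.le)
    rw [sub_add_sub_cancel', add_sub_cancel] at h_log
    nlinarith [h_nonneg s hs.1 (hs.2.trans htt₀)]
  have h_split := intervalIntegral.integral_add_adjacent_intervals h_int_left h_int_right
  rw [hE.eq_add_mul (ht.trans htt₀), ← h_split] at h_nonpos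
  have h_mul := mul_le_mul_of_nonneg_right h_nonpos (hK.pos t ht).le
  rw [hE.eq_add_mul ht]
  nlinarith [mul_le_mul_of_nonneg_left h_memory (neg_nonneg.2 hβ.le)]

end SolvesResolventEq

lemma exists_first_nonpos {f : ℝ → ℝ} {δ t₁ : ℝ} (hf : ContinuousOn f (Ioi 0)) (hδ : 0 < δ)
    (h_pos : ∀ t, 0 < t → t < δ → 0 < f t) (ht₁ : 0 < t₁) (h_nonpos : f t₁ ≤ 0) :
    ∃ t₀ > 0, f t₀ ≤ 0 ∧ ∀ t, 0 < t → t < t₀ → 0 < f t := by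
  have h_closed : IsClosed (Icc δ t₁ ∩ f ⁻¹' Iic 0) :=
    (hf.mono fun t ht ↦ hδ.trans_le ht.1).preimage_isClosed_of_isClosed isClosed_Icc isClosed_Iic
  have h_compact := isCompact_Icc.of_isClosed_subset h_closed inter_subset_left
  have h_ge : ∀ t, 0 < t → f t ≤ 0 → δ ≤ t := fun t ht hft ↦
    not_lt.1 fun htδ ↦ (h_pos t ht htδ).not_ge hft
  obtain ⟨t₀, ⟨ht₀, hft₀⟩, h_least⟩ :=
    h_compact.exists_isLeast ⟨t₁, ⟨h_ge t₁ ht₁ h_nonpos, le_rfl⟩, h_nonpos⟩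
  refine ⟨t₀, hδ.trans_le ht₀.1, hft₀, fun t ht htt₀ ↦ ?_⟩
  by_contra! hft
  exact htt₀.not_ge (h_least ⟨⟨h_ge t ht hft, htt₀.le.trans ht₀.2⟩, hft⟩)

namespace IsVolterraKernel

variable {K : ℝ → ℝ}

lemma intervalIntegrable (hK : IsVolterraKernel K) {a b : ℝ} (ha : 0 ≤ a) (hb : 0 ≤ b) :
    IntervalIntegrable K volume a b :=
  hK.locSqIntegrable.intervalIntegrable ha hb

lemma monotoneOn_integral (hK : IsVolterraKernel K) :
    MonotoneOn (fun t ↦ ∫ s in (0 : ℝ)..t, K s) (Ici 0) := fun _ ha _ hb hab ↦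
  intervalIntegral.integral_mono_interval le_rfl ha hab
    ((ae_restrict_mem measurableSet_Ioc).mono fun s hs ↦ (hK.pos s hs.1).le)
    (hK.intervalIntegrable le_rfl hb)

lemma integral_nonneg (hK : IsVolterraKernel K) {t : ℝ} (ht : 0 ≤ t) :
    0 ≤ ∫ s in (0 : ℝ)..t, K s := by
  simpa only [intervalIntegral.integral_same] using
    hK.monotoneOn_integral self_mem_Ici ht ht

lemma tendsto_integral_zero (hK : IsVolterraKernel K) :
    Tendsto (fun t ↦ ∫ s in (0 : ℝ)..t, K s) (𝓝[>] 0) (𝓝 0) := by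
  have h_cont := intervalIntegral.continuousOn_primitive_interval'
    (hK.intervalIntegrable le_rfl zero_le_one) left_mem_uIcc
  rw [uIcc_of_le zero_le_one] at h_cont
  have h := (h_cont 0 ⟨le_rfl, zero_le_one⟩).mono_of_mem_nhdsWithin (Icc_mem_nhdsGT one_pos)
  simpa only [intervalIntegral.integral_same] using h.tendsto

lemma exists_mul_integral_lt (hK : IsVolterraKernel K) (c : ℝ) {t : ℝ} (ht : 0 < t) :
    ∃ g > 0, g < t ∧ c * K (t - g) * (∫ s in (0 : ℝ)..g, K s) < K t := by
  have h_sub : Tendsto (fun g ↦ t - g) (𝓝[>] 0) (𝓝 t) :=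
    ((continuous_sub_left t).tendsto' 0 t (sub_zero t)).mono_left nhdsWithin_le_nhds
  have hK_cont := (hK.continuousOn.continuousAt (Ioi_mem_nhds ht)).tendsto.comp h_sub
  have h_lim := (hK_cont.const_mul c).mul hK.tendsto_integral_zero
  rw [mul_zero] at h_lim
  obtain ⟨g, h_lt, hg⟩ := ((h_lim.eventually (gt_mem_nhds (hK.pos t ht))).and
    (Ioo_mem_nhdsGT ht)).exists
  exact ⟨g, hg.1, hg.2, h_lt⟩

lemma integral_comp_sub_mul_le (hK : IsVolterraKernel K) {f : ℝ → ℝ} (hf : LocSqIntegrable f)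
    {M a t : ℝ} (ha : 0 ≤ a) (hat : a ≤ t) (h_le : ∀ s ∈ Icc a t, f s ≤ M) :
    ∫ s in a..t, K (t - s) * f s ≤ (∫ s in (0 : ℝ)..(t - a), K s) * M := by
  have h_sub := intervalIntegral.integral_comp_sub_left K (a := a) (b := t) t
  rw [sub_self] at h_sub
  rw [← h_sub, ← intervalIntegral.integral_mul_const]
  have h_int := hK.locSqIntegrable.intervalIntegrable_comp_sub_mul hf (ha.trans hat)
  have hK_int := (hK.intervalIntegrable le_rfl (sub_nonneg.2 hat)).comp_sub_left t
  rw [sub_zero, sub_sub_cancel] at hK_int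
  refine intervalIntegral.integral_mono_on_of_le_Ioo hat (h_int.mono_set ?_)
    (hK_int.symm.mul_const M) fun s hs ↦
      mul_le_mul_of_nonneg_left (h_le s (Ioo_subset_Icc_self hs)) (hK.pos _ (sub_pos.2 hs.2)).le
  rw [uIcc_of_le hat, uIcc_of_le (ha.trans hat)]
  exact Icc_subset_Icc_left ha

end IsVolterraKernel

namespace SolvesResolventEq

variable {K E : ℝ → ℝ} {β : ℝ}

lemma pos (hE : SolvesResolventEq K β E) (hK : IsVolterraKernel K) (hβ : β < 0) :
    ∀ t, 0 < t → 0 < E t := by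
  by_contra! ⟨t₁, ht₁, hEt₁⟩
  obtain ⟨δ, hδ, h_near⟩ := hE.exists_forall_lt_pos hK hβ.ne
  obtain ⟨t₀, ht₀, hEt₀, h_pos⟩ :=
    exists_first_nonpos (hE.continuousOn hK hβ.ne) hδ h_near ht₁ hEt₁
  obtain ⟨g, hg, hgt₀, h_small⟩ := hK.exists_mul_integral_lt (-β) ht₀
  obtain ⟨t, ht, h_max⟩ := isCompact_Icc.exists_isMaxOn
    (nonempty_Icc.2 (sub_le_self t₀ hg.le)) ((hE.continuousOn hK hβ.ne).mono
      fun t ht ↦ (sub_pos.2 hgt₀).trans_le ht.1)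
  have hEt : 0 < E t := (h_pos _ (sub_pos.2 hgt₀) (sub_lt_self t₀ hg)).trans_le
    (h_max ⟨le_rfl, sub_le_self t₀ hg.le⟩)
  have htt₀ : t < t₀ := ht.2.lt_of_ne (by rintro rfl; exact hEt.not_ge hEt₀)
  have ht0 : 0 < t := (sub_pos.2 hgt₀).trans_le ht.1
  have h_integral : ∫ s in t..t₀, K (t₀ - s) * E s ≤ (∫ s in (0 : ℝ)..g, K s) * E t := by
    refine (hK.integral_comp_sub_mul_le (hE.locSqIntegrable hK hβ.ne) ht0.le htt₀.le fun s hs ↦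
      h_max ⟨ht.1.trans hs.1, hs.2⟩).trans (mul_le_mul_of_nonneg_right ?_ hEt.le)
    exact hK.monotoneOn_integral (sub_nonneg.2 htt₀.le) hg.le (by linarith [ht.1])
  have h_log := hE.mul_le_mul_integral_of_nonpos hK hβ ht0 htt₀ (fun s hs hst ↦ (h_pos s hs hst).le)
    hEt₀
  have hK_le : K t ≤ K (t₀ - g) := hK.antitoneOn (sub_pos.2 hgt₀) ht0 ht.1
  have := calc
    E t * K t₀ ≤ -β * K t * ∫ s in t..t₀, K (t₀ - s) * E s := h_log
    _ ≤ -β * K t * ((∫ s in (0 : ℝ)..g, K s) * E t) :=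
      mul_le_mul_of_nonneg_left h_integral (mul_nonneg (neg_nonneg.2 hβ.le) (hK.pos t ht0).le)
    _ ≤ -β * K (t₀ - g) * ((∫ s in (0 : ℝ)..g, K s) * E t) := by
      gcongr
      · exact mul_nonneg (hK.integral_nonneg hg.le) hEt.le
      · exact neg_nonneg.2 hβ.le
    _ < E t * K t₀ := by
      rw [← mul_assoc, mul_comm]
      exact mul_lt_mul_of_pos_left h_small hEt
  exact this.false

lemma le_kernel (hE : SolvesResolventEq K β E) (hK : IsVolterraKernel K) (hβ : β < 0) {t : ℝ}
    (ht : 0 < t) : E t ≤ K t := by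
  have h_conv : 0 ≤ ∫ s in (0 : ℝ)..t, K (t - s) * E s := by
    rw [intervalIntegral.integral_of_le ht.le, integral_Ioc_eq_integral_Ioo]
    exact setIntegral_nonneg measurableSet_Ioo fun s hs ↦
      mul_nonneg (hK.pos _ (sub_pos.2 hs.2)).le (hE.pos hK hβ s hs.1).le
  rw [hE.eq_add_mul ht]
  nlinarith

lemma integral_eq (hE : SolvesResolventEq K β E) (hK : IsVolterraKernel K) (hβ : β ≠ 0) {t : ℝ}
    (ht : 0 ≤ t) :
    ∫ s in (0 : ℝ)..t, E s = (∫ s in (0 : ℝ)..t, K s) +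
      β * ∫ s in (0 : ℝ)..t, (∫ u in (0 : ℝ)..(t - s), K u) * E s := by
  have hLE := hE.locSqIntegrable hK hβ
  have h_conv : IntervalIntegrable (fun u ↦ ∫ s in (0 : ℝ)..u, K (u - s) * E s) volume 0 t :=
    ((hK.locSqIntegrable.continuousOn_integral_comp_sub_mul hLE).mono (by
      rw [uIcc_of_le ht]; exact Icc_subset_Ici_self)).intervalIntegrable
  rw [← integral_integral_comp_sub_mul ht (hK.locSqIntegrable.integrableOn t)
    (hLE.integrableOn t), ← intervalIntegral.integral_const_mul,
    ← intervalIntegral.integral_add (hK.intervalIntegrable le_rfl ht) (h_conv.const_mul β)]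
  exact intervalIntegral.integral_congr_Ioo_of_le ht fun u hu ↦ hE.eq_add_mul hu.1

lemma intervalIntegrable_integral_kernel_mul (hE : SolvesResolventEq K β E)
    (hK : IsVolterraKernel K) (hβ : β ≠ 0) {t : ℝ} (ht : 0 ≤ t) :
    IntervalIntegrable (fun s ↦ (∫ u in (0 : ℝ)..(t - s), K u) * E s) volume 0 t := by
  refine ((hE.locSqIntegrable hK hβ).intervalIntegrable le_rfl ht).continuousOn_mul ?_
  have h_cont := intervalIntegral.continuousOn_primitive_interval'
    (hK.intervalIntegrable le_rfl ht) left_mem_uIcc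
  refine h_cont.comp (by fun_prop) fun s hs ↦ ?_
  rw [uIcc_of_le ht] at hs ⊢
  exact ⟨sub_nonneg.2 hs.2, sub_le_self t hs.1⟩

-- Both bounds come from `∫ E = κ + β (κ ⋆ E)`, where the primitive `κ` of `K` is non-decreasing.
lemma integral_kernel_mul_one_add_le (hE : SolvesResolventEq K β E) (hK : IsVolterraKernel K)
    (hβ : β < 0) {t : ℝ} (ht : 0 ≤ t) :
    (∫ s in (0 : ℝ)..t, K s) * (1 + β * ∫ s in (0 : ℝ)..t, E s) ≤ ∫ s in (0 : ℝ)..t, E s := by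
  have h_memory : ∫ s in (0 : ℝ)..t, (∫ u in (0 : ℝ)..(t - s), K u) * E s ≤
      (∫ s in (0 : ℝ)..t, K s) * ∫ s in (0 : ℝ)..t, E s := by
    rw [← intervalIntegral.integral_const_mul]
    refine intervalIntegral.integral_mono_on_of_le_Ioo ht
      (hE.intervalIntegrable_integral_kernel_mul hK hβ.ne ht)
      (((hE.locSqIntegrable hK hβ.ne).intervalIntegrable le_rfl ht).const_mul _) fun s hs ↦ ?_
    exact mul_le_mul_of_nonneg_right (hK.monotoneOn_integral (sub_nonneg.2 hs.2.le) ht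
      (sub_le_self t hs.1.le)) (hE.pos hK hβ s hs.1).le
  nlinarith [hE.integral_eq hK hβ.ne ht]

lemma neg_mul_integral_mul_le (hE : SolvesResolventEq K β E) (hK : IsVolterraKernel K)
    (hβ : β < 0) {a t : ℝ} (ha : 0 ≤ a) (hat : a ≤ t) :
    -β * (∫ s in (0 : ℝ)..a, E s) * (∫ s in (0 : ℝ)..(t - a), K s) ≤ ∫ s in (0 : ℝ)..t, K s := by
  have ht := ha.trans hat
  have hLE := hE.locSqIntegrable hK hβ.ne
  have h_int := hE.intervalIntegrable_integral_kernel_mul hK hβ.ne ht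
  have h_memory : (∫ s in (0 : ℝ)..a, E s) * (∫ s in (0 : ℝ)..(t - a), K s) ≤
      ∫ s in (0 : ℝ)..t, (∫ u in (0 : ℝ)..(t - s), K u) * E s := by
    rw [mul_comm, ← intervalIntegral.integral_const_mul]
    refine le_trans (intervalIntegral.integral_mono_on_of_le_Ioo ha
      ((hLE.intervalIntegrable le_rfl ha).const_mul _) (h_int.mono_set ?_) fun s hs ↦ ?_)
      (intervalIntegral.integral_mono_interval le_rfl ha hat ?_ h_int)
    · rw [uIcc_of_le ha, uIcc_of_le ht]
      exact Icc_subset_Icc_right hat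
    · exact mul_le_mul_of_nonneg_right (hK.monotoneOn_integral (sub_nonneg.2 hat)
        (sub_nonneg.2 (hs.2.le.trans hat)) (sub_le_sub_left hs.2.le t)) (hE.pos hK hβ s hs.1).le
    · filter_upwards [ae_restrict_mem measurableSet_Ioc] with s hs
      exact mul_nonneg (hK.integral_nonneg (sub_nonneg.2 hs.2)) (hE.pos hK hβ s hs.1).le
  have h_nonneg : 0 ≤ ∫ s in (0 : ℝ)..t, E s := by
    rw [intervalIntegral.integral_of_le ht]
    exact setIntegral_nonneg measurableSet_Ioc fun s hs ↦ (hE.pos hK hβ s hs.1).le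
  nlinarith [hE.integral_eq hK hβ.ne ht, mul_le_mul_of_nonneg_left h_memory (neg_nonneg.2 hβ.le)]

end SolvesResolventEq

namespace IsVolterraKernel

variable {K : ℝ → ℝ}

lemma tendsto_integral_sub (hK : IsVolterraKernel K) (a : ℝ) :
    Tendsto (fun t ↦ ∫ s in (0 : ℝ)..(t - a), K s) atTop atTop :=
  hK.tendsto_integral.comp ((tendsto_atTop_add_const_right _ (-a) tendsto_id).congr fun t ↦
    (sub_eq_add_neg t a).symm)

lemma tendsto_integral_div (hK : IsVolterraKernel K) {a : ℝ} (ha : 0 < a) :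
    Tendsto (fun t ↦ (∫ s in (0 : ℝ)..t, K s) / ∫ s in (0 : ℝ)..(t - a), K s) atTop (𝓝 1) := by
  have h_den := hK.tendsto_integral_sub a
  have h_upper : Tendsto (fun t ↦ 1 + (K a * a) / ∫ s in (0 : ℝ)..(t - a), K s) atTop (𝓝 1) := by
    simpa only [add_zero] using (h_den.const_div_atTop (K a * a)).const_add 1
  refine tendsto_of_tendsto_of_tendsto_of_le_of_le' tendsto_const_nhds h_upper ?_ ?_
  · filter_upwards [h_den.eventually_gt_atTop 0, eventually_ge_atTop a] with t h_pos hat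
    exact (one_le_div h_pos).2 (hK.monotoneOn_integral (sub_nonneg.2 hat) (ha.le.trans hat)
      (sub_le_self t ha.le))
  · filter_upwards [h_den.eventually_gt_atTop 0, eventually_ge_atTop (2 * a)] with t h_pos hat
    have h_split := intervalIntegral.integral_add_adjacent_intervals
      (hK.intervalIntegrable le_rfl (show 0 ≤ t - a by linarith))
      (hK.intervalIntegrable (show 0 ≤ t - a by linarith) (show 0 ≤ t by linarith))
    have h_last : ∫ s in (t - a)..t, K s ≤ K a * a := by
      refine (intervalIntegral.integral_mono_on (sub_le_self t ha.le)
        (hK.intervalIntegrable (by linarith) (by linarith)) intervalIntegrable_const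
        fun s hs ↦ hK.antitoneOn ha (mem_Ioi.2 (by linarith [hs.1])) (by linarith [hs.1])).trans_eq
        ?_
      rw [intervalIntegral.integral_const, sub_sub_cancel, smul_eq_mul, mul_comm]
    rw [← h_split, add_div, div_self h_pos.ne']
    gcongr

end IsVolterraKernel

namespace SolvesResolventEq

variable {K E : ℝ → ℝ} {β : ℝ}

lemma one_add_mul_integral_nonneg (hE : SolvesResolventEq K β E) (hK : IsVolterraKernel K)
    (hβ : β < 0) {t : ℝ} (ht : 0 < t) : 0 ≤ 1 + β * ∫ s in (0 : ℝ)..t, E s := by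
  have h_le : -β * (∫ s in (0 : ℝ)..t, E s) ≤ 1 := by
    refine ge_of_tendsto (hK.tendsto_integral_div ht) ?_
    filter_upwards [(hK.tendsto_integral_sub t).eventually_gt_atTop 0,
      eventually_ge_atTop t] with u h_pos htu
    exact (le_div_iff₀ h_pos).2 (hE.neg_mul_integral_mul_le hK hβ ht.le htu)
  linarith

lemma one_add_mul_integral_le (hE : SolvesResolventEq K β E) (hK : IsVolterraKernel K)
    (hβ : β < 0) {t : ℝ} (ht : 0 < t) :
    1 + β * ∫ s in (0 : ℝ)..t, E s ≤ (1 + -β * ∫ s in (0 : ℝ)..t, K s)⁻¹ := by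
  have hκ := mul_nonneg (neg_nonneg.2 hβ.le) (hK.integral_nonneg ht.le)
  rw [← one_div, le_div_iff₀ (by linarith)]
  nlinarith [mul_le_mul_of_nonneg_left (hE.integral_kernel_mul_one_add_le hK hβ ht.le)
    (neg_nonneg.2 hβ.le)]

lemma tendsto_one_add_mul_integral (hE : SolvesResolventEq K β E) (hK : IsVolterraKernel K)
    (hβ : β < 0) : Tendsto (fun t ↦ 1 + β * ∫ s in (0 : ℝ)..t, E s) atTop (𝓝 0) := by
  have h_upper : Tendsto (fun t ↦ (1 + -β * ∫ s in (0 : ℝ)..t, K s)⁻¹) atTop (𝓝 0) :=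
    tendsto_inv_atTop_zero.comp (tendsto_atTop_add_const_left _ _
      (hK.tendsto_integral.const_mul_atTop (neg_pos.2 hβ)))
  refine squeeze_zero' ?_ ?_ h_upper
  · filter_upwards [eventually_gt_atTop 0] with t ht
    exact hE.one_add_mul_integral_nonneg hK hβ ht
  · filter_upwards [eventually_gt_atTop 0] with t ht
    exact hE.one_add_mul_integral_le hK hβ ht

lemma integrableOn (hE : SolvesResolventEq K β E) (hK : IsVolterraKernel K) (hβ : β < 0) :
    IntegrableOn E (Ioi 0) := by
  refine integrableOn_Ioi_of_intervalIntegral_norm_bounded (-β)⁻¹ 0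
    (hE.locSqIntegrable hK hβ.ne).integrableOn tendsto_id ?_
  filter_upwards [eventually_gt_atTop 0] with t ht
  have h_norm : ∫ s in (0 : ℝ)..t, ‖E s‖ = ∫ s in (0 : ℝ)..t, E s :=
    intervalIntegral.integral_congr_Ioo_of_le ht.le fun s hs ↦
      Real.norm_of_nonneg (hE.pos hK hβ s hs.1).le
  rw [h_norm, ← one_div, le_div_iff₀ (neg_pos.2 hβ)]
  linarith [hE.one_add_mul_integral_nonneg hK hβ ht]

lemma integral_Ioi (hE : SolvesResolventEq K β E) (hK : IsVolterraKernel K) (hβ : β < 0) :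
    ∫ t in Ioi (0 : ℝ), E t = (-β)⁻¹ := by
  have h_lim := (((intervalIntegral_tendsto_integral_Ioi 0 (hE.integrableOn hK hβ)
    tendsto_id).const_mul β).const_add 1)
  have h_eq := tendsto_nhds_unique h_lim (hE.tendsto_one_add_mul_integral hK hβ)
  refine eq_inv_of_mul_eq_one_right ?_
  linarith

lemma integral_Ioi_gt (hE : SolvesResolventEq K β E) (hK : IsVolterraKernel K) (hβ : β < 0)
    {t : ℝ} (ht : 0 ≤ t) :
    -β * ∫ s in Ioi t, E s = 1 + β * ∫ s in (0 : ℝ)..t, E s := by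
  have h_split := intervalIntegral.integral_interval_add_Ioi (hE.integrableOn hK hβ)
    ((hE.integrableOn hK hβ).mono_set (Ioi_subset_Ioi ht))
  rw [hE.integral_Ioi hK hβ] at h_split
  field_simp [hβ.ne] at h_split
  linarith

lemma sq_le_kernel_mul (hE : SolvesResolventEq K β E) (hK : IsVolterraKernel K) (hβ : β < 0)
    {s t : ℝ} (ht : 0 < t) (hts : t ≤ s) : E s ^ 2 ≤ K t * E s := by
  have hs : 0 < s := ht.trans_le hts
  rw [sq]
  exact mul_le_mul_of_nonneg_right ((hE.le_kernel hK hβ hs).trans (hK.antitoneOn ht hs hts))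
    (hE.pos hK hβ s hs).le

lemma integrableOn_sq (hE : SolvesResolventEq K β E) (hK : IsVolterraKernel K) (hβ : β < 0) :
    IntegrableOn (fun t ↦ E t ^ 2) (Ioi 0) := by
  rw [← Ioc_union_Ioi_eq_Ioi zero_le_one, integrableOn_union]
  have h_tail := (hE.integrableOn hK hβ).mono_set (Ioi_subset_Ioi zero_le_one)
  refine ⟨(hE.locSqIntegrable hK hβ.ne 1).integrable_sq, (h_tail.const_mul (K 1)).mono'
    (h_tail.aestronglyMeasurable.pow 2) ?_⟩
  filter_upwards [ae_restrict_mem measurableSet_Ioi] with s hs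
  rw [Real.norm_of_nonneg (sq_nonneg _)]
  exact hE.sq_le_kernel_mul hK hβ one_pos (le_of_lt hs)

lemma integral_Ioi_sq_le (hE : SolvesResolventEq K β E) (hK : IsVolterraKernel K) (hβ : β < 0)
    {t : ℝ} (ht : 0 < t) :
    ∫ s in Ioi t, E s ^ 2 ≤ K t * ∫ s in Ioi t, E s := by
  rw [← integral_const_mul]
  exact setIntegral_mono_on ((hE.integrableOn_sq hK hβ).mono_set (Ioi_subset_Ioi ht.le))
    (((hE.integrableOn hK hβ).mono_set (Ioi_subset_Ioi ht.le)).const_mul _) measurableSet_Ioi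
    fun s hs ↦ hE.sq_le_kernel_mul hK hβ ht (le_of_lt hs)

end SolvesResolventEq

end Volterra

section Plancherel

open FourierTransform ComplexConjugate Convolution

lemma fourier_conj_comp_neg (f : ℝ → ℂ) (ξ : ℝ) :
    𝓕 (fun x ↦ conj (f (-x))) ξ = conj (𝓕 f ξ) := by
  rw [Real.fourier_eq', Real.fourier_eq', ← integral_conj, ← integral_neg_eq_self]
  congr 1 with x
  simp only [smul_eq_mul, map_mul, neg_neg, ← Complex.exp_conj, Complex.conj_I, Complex.conj_ofReal,
    map_neg, inner_neg_left, mul_neg, neg_mul, Complex.ofReal_neg]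

lemma convolution_conj_comp_neg {𝕜 : Type*} [RCLike 𝕜] (f : ℝ → 𝕜) (x : ℝ) :
    (f ⋆[ContinuousLinearMap.mul 𝕜 𝕜] fun x ↦ conj (f (-x))) x =
      ∫ r, inner 𝕜 (f r) (f (x + r)) := by
  rw [convolution_def, ← integral_add_left_eq_self _ x]
  congr 1 with r
  simp only [ContinuousLinearMap.mul_apply', RCLike.inner_apply, neg_sub, add_sub_cancel_left]

-- Fourier inversion at `0` for the autocorrelation of `f`, whose Fourier transform is `‖𝓕 f‖ ^ 2`.
theorem integral_norm_sq_eq_integral_norm_fourier_sq {f : ℝ → ℂ} (hf : Integrable f)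
    (hf2 : MemLp f 2) (h_fourier : Integrable fun ξ ↦ ‖𝓕 f ξ‖ ^ 2) :
    ∫ x, ‖f x‖ ^ 2 = ∫ ξ, ‖𝓕 f ξ‖ ^ 2 := by
  set A : ℝ → ℂ := f ⋆[ContinuousLinearMap.mul ℂ ℂ] fun x ↦ conj (f (-x)) with hA
  have hf_conj : Integrable fun x ↦ conj (f (-x)) :=
    (RCLike.conjLIE.integrable_comp_iff).2 hf.comp_neg
  have hA_int : Integrable A := hf.integrable_convolution _ hf_conj
  have hA_cont : Continuous A :=
    (continuous_integral_inner_comp_add hf2 hf2).congr fun x ↦ (convolution_conj_comp_neg f x).symm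
  have hA_fourier : 𝓕 A = fun ξ ↦ ((‖𝓕 f ξ‖ ^ 2 : ℝ) : ℂ) := by
    ext ξ
    rw [hA, Real.fourier_mul_convolution_eq hf hf_conj, fourier_conj_comp_neg, Complex.mul_conj']
    push_cast
    rfl
  have h_inv := congrFun (hA_cont.fourierInv_fourier_eq hA_int (hA_fourier ▸ h_fourier.ofReal)) 0
  rw [hA_fourier, Real.fourierInv_eq', hA, convolution_conj_comp_neg] at h_inv
  simp only [inner_zero_right, mul_zero, Complex.ofReal_zero, zero_mul, Complex.exp_zero, one_smul,
    zero_add, inner_self_eq_norm_sq_to_K] at h_inv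
  simp only [RCLike.ofReal_eq_complex_ofReal, ← Complex.ofReal_pow, integral_complex_ofReal]
    at h_inv
  exact_mod_cast h_inv.symm

end Plancherel

section Laplace

open FourierTransform

/-- The Laplace transform `z ↦ ∫₀^∞ e^{-zt} f(t) dt` of a real function on the half-line. -/
def laplaceTransform (f : ℝ → ℝ) (z : ℂ) : ℂ :=
  ∫ t in Ioi (0 : ℝ), Complex.exp (-z * t) * f t

lemma norm_cexp_neg_mul_ofReal_le_one {z : ℂ} (hz : 0 ≤ z.re) {t : ℝ} (ht : 0 ≤ t) :
    ‖Complex.exp (-z * t)‖ ≤ 1 := by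
  rw [Complex.norm_exp, Real.exp_le_one_iff]
  simpa using mul_nonneg hz ht

lemma integrableOn_cexp_neg_mul_mul {f : ℝ → ℝ} (hf : IntegrableOn f (Ioi 0)) {z : ℂ}
    (hz : 0 ≤ z.re) :
    IntegrableOn (fun t : ℝ ↦ Complex.exp (-z * t) * f t) (Ioi 0) := by
  refine hf.ofReal.bdd_mul (by fun_prop) (c := 1) ?_
  filter_upwards [ae_restrict_mem measurableSet_Ioi] with t ht
  exact norm_cexp_neg_mul_ofReal_le_one hz (le_of_lt ht)

lemma continuousOn_laplaceTransform {f : ℝ → ℝ} (hf : IntegrableOn f (Ioi 0)) :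
    ContinuousOn (laplaceTransform f) {z | 0 ≤ z.re} := by
  refine continuousOn_of_dominated (bound := fun t ↦ ‖f t‖)
    (fun z hz ↦ (integrableOn_cexp_neg_mul_mul hf hz).aestronglyMeasurable) (fun z hz ↦ ?_) hf.norm
    (ae_of_all _ fun t ↦ by fun_prop)
  filter_upwards [ae_restrict_mem measurableSet_Ioi] with t ht
  rw [norm_mul, Complex.norm_real]
  exact mul_le_of_le_one_left (norm_nonneg _) (norm_cexp_neg_mul_ofReal_le_one hz (le_of_lt ht))

lemma fourier_indicator_Ioi (f : ℝ → ℝ) (ξ : ℝ) :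
    𝓕 ((Ioi (0 : ℝ)).indicator fun t ↦ (f t : ℂ)) ξ =
      laplaceTransform f ((2 * Real.pi * ξ : ℝ) * Complex.I) := by
  rw [Real.fourier_eq', laplaceTransform, ← integral_indicator measurableSet_Ioi]
  congr 1 with t
  by_cases ht : t ∈ Ioi 0
  · rw [indicator_of_mem ht, indicator_of_mem ht, smul_eq_mul]
    congr 2
    simp only [RCLike.inner_apply, conj_trivial]
    push_cast
    ring
  · rw [indicator_of_notMem ht, indicator_of_notMem ht, smul_zero]

lemma IsVolterraKernel.integrableOn_cexp_neg_mul_mul {K : ℝ → ℝ} (hK : IsVolterraKernel K) {z : ℂ}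
    (hz : 0 < z.re) : IntegrableOn (fun t : ℝ ↦ Complex.exp (-z * t) * K t) (Ioi 0) := by
  have h_norm : ∀ t : ℝ, ‖Complex.exp (-z * t)‖ = Real.exp (-z.re * t) := fun t ↦ by
    simp [Complex.norm_exp]
  have hK_meas := (hK.continuousOn.aestronglyMeasurable (μ := volume) measurableSet_Ioi)
  have h_meas : AEStronglyMeasurable (fun t : ℝ ↦ Complex.exp (-z * t) * K t)
      (volume.restrict (Ioi 0)) :=
    .mul (by fun_prop) (Complex.continuous_ofReal.comp_aestronglyMeasurable hK_meas)
  rw [← Ioc_union_Ioi_eq_Ioi zero_le_one, integrableOn_union]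
  constructor
  · refine (hK.locSqIntegrable.integrableOn 1).mono' (h_meas.mono_set Ioc_subset_Ioi_self) ?_
    filter_upwards [ae_restrict_mem measurableSet_Ioc] with t ht
    rw [norm_mul, Complex.norm_real, Real.norm_of_nonneg (hK.pos t ht.1).le]
    exact mul_le_of_le_one_left (hK.pos t ht.1).le (norm_cexp_neg_mul_ofReal_le_one hz.le ht.1.le)
  · refine ((integrableOn_exp_mul_Ioi (neg_neg_of_pos hz) 1).mul_const (K 1)).mono'
      (h_meas.mono_set (Ioi_subset_Ioi zero_le_one)) ?_
    filter_upwards [ae_restrict_mem measurableSet_Ioi] with t ht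
    have ht0 : 0 < t := one_pos.trans ht
    rw [norm_mul, Complex.norm_real, Real.norm_of_nonneg (hK.pos t ht0).le, h_norm]
    exact mul_le_mul_of_nonneg_left (hK.antitoneOn (mem_Ioi.2 one_pos) ht0 (le_of_lt ht))
      (Real.exp_pos _).le

lemma SolvesResolventEq.laplaceTransform_eq {K E : ℝ → ℝ} {β : ℝ} (hE : SolvesResolventEq K β E)
    (hK : IsVolterraKernel K) (hβ : β < 0) {z : ℂ} (hz : 0 < z.re) :
    laplaceTransform E z =
      laplaceTransform K z + β * (laplaceTransform E z * laplaceTransform K z) := by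
  have hE_int := integrableOn_cexp_neg_mul_mul (hE.integrableOn hK hβ) hz.le
  have hK_int := hK.integrableOn_cexp_neg_mul_mul hz
  have h_exp (t : ℝ) : ∫ s in (0 : ℝ)..t, ContinuousLinearMap.mul ℝ ℂ
      (Complex.exp (-z * s) * E s) (Complex.exp (-z * ↑(t - s)) * K (t - s)) =
      Complex.exp (-z * t) * (∫ s in (0 : ℝ)..t, K (t - s) * E s : ℝ) := by
    rw [← intervalIntegral.integral_ofReal, ← intervalIntegral.integral_const_mul]
    refine intervalIntegral.integral_congr fun s _ ↦ ?_
    simp only [ContinuousLinearMap.mul_apply']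
    rw [show -z * t = -z * s + -z * ((t - s : ℝ) : ℂ) by push_cast; ring, Complex.exp_add]
    push_cast
    ring
  have h_conv : laplaceTransform E z * laplaceTransform K z =
      ∫ t in Ioi (0 : ℝ), Complex.exp (-z * t) * (∫ s in (0 : ℝ)..t, K (t - s) * E s : ℝ) := by
    simp only [← h_exp]
    exact (integral_posConvolution hE_int hK_int (ContinuousLinearMap.mul ℝ ℂ)).symm
  have h_conv_int : IntegrableOn (fun t : ℝ ↦
      Complex.exp (-z * t) * (∫ s in (0 : ℝ)..t, K (t - s) * E s : ℝ)) (Ioi 0) := by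
    simp only [← h_exp]
    exact (integrable_indicator_iff measurableSet_Ioi).1
      (integrable_posConvolution hE_int hK_int (ContinuousLinearMap.mul ℝ ℂ))
  rw [h_conv, laplaceTransform, laplaceTransform, ← integral_const_mul, ← integral_add hK_int
    (h_conv_int.const_mul _)]
  refine setIntegral_congr_fun measurableSet_Ioi fun t ht ↦ ?_
  rw [hE.eq_add_mul ht]
  push_cast
  ring

end Laplace

section LaplaceAnalytic

open ProbabilityTheory

lemma IsVolterraKernel.analyticOnNhd_laplaceTransform {K : ℝ → ℝ} (hK : IsVolterraKernel K) :
    AnalyticOnNhd ℂ (laplaceTransform K) {z | 0 < z.re} := by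
  have hK_meas : AEMeasurable (fun t ↦ ENNReal.ofReal (K t)) (volume.restrict (Ioi 0)) :=
    (hK.continuousOn.aemeasurable measurableSet_Ioi).ennreal_ofReal
  set μ : Measure ℝ := (volume.restrict (Ioi 0)).withDensity fun t ↦ ENNReal.ofReal (K t) with hμ
  have h_finite : ∀ᵐ t ∂volume.restrict (Ioi (0 : ℝ)), ENNReal.ofReal (K t) < ∞ :=
    ae_of_all _ fun t ↦ ENNReal.ofReal_lt_top
  have h_eq (z : ℂ) : complexMGF id μ (-z) = laplaceTransform K z := by
    rw [complexMGF, hμ, integral_withDensity_eq_integral_toReal_smul₀ hK_meas h_finite]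
    refine setIntegral_congr_fun measurableSet_Ioi fun t ht ↦ ?_
    simp only [id_eq, ENNReal.toReal_ofReal (hK.pos t ht).le, Complex.real_smul, mul_comm]
  have h_exp : Iio 0 ⊆ integrableExpSet id μ := fun c hc ↦ by
    have h_int := (hK.integrableOn_cexp_neg_mul_mul (z := -c) (by simpa using hc)).re
    refine (integrable_withDensity_iff_integrable_smul₀' hK_meas h_finite).2
      ((integrableOn_congr_fun (fun t ht ↦ ?_) measurableSet_Ioi).1 h_int)
    rw [ENNReal.toReal_ofReal (hK.pos t ht).le, neg_neg, smul_eq_mul, id_eq, mul_comm (K t)]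
    norm_cast
  have h_maps : MapsTo Neg.neg {z : ℂ | 0 < z.re} {z | z.re ∈ interior (integrableExpSet id μ)} :=
    fun z hz ↦ interior_mono h_exp (by simpa using hz)
  exact (analyticOnNhd_complexMGF.comp analyticOnNhd_id.neg h_maps).congr
    (Complex.isOpen_re_gt 0) fun z _ ↦ h_eq z

end LaplaceAnalytic

section FractionalKernel

variable {α : ℝ}

lemma integral_fractionalKernel (hα : 0 < α) (t : ℝ) :
    ∫ s in (0 : ℝ)..t, fractionalKernel α s = t ^ α / α / Real.Gamma α := by
  simp only [fractionalKernel, intervalIntegral.integral_div]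
  rw [integral_rpow (.inl (by linarith)), sub_add_cancel, Real.zero_rpow hα.ne', sub_zero]

lemma locSqIntegrable_fractionalKernel (hα : 1 / 2 < α) : LocSqIntegrable (fractionalKernel α) := by
  intro T
  have h_meas : Measurable (fractionalKernel α) := by
    unfold fractionalKernel
    fun_prop
  refine (memLp_two_iff_integrable_sq h_meas.aestronglyMeasurable).2 ?_
  rcases le_total T 0 with hT | hT
  · simp [Ioc_eq_empty_of_le hT]
  have h_int : IntegrableOn (fun t : ℝ ↦ t ^ (2 * (α - 1)) / Real.Gamma α ^ 2) (Ioc 0 T) :=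
    ((intervalIntegrable_iff_integrableOn_Ioc_of_le hT).1
      (intervalIntegral.intervalIntegrable_rpow' (by linarith))).div_const _
  refine (integrableOn_congr_fun (fun t ht ↦ ?_) measurableSet_Ioc).1 h_int
  simp only [fractionalKernel, div_pow, ← Real.rpow_mul_natCast ht.1.le, Nat.cast_ofNat, mul_comm]

lemma isVolterraKernel_fractionalKernel (hα : α ∈ Ioo (1 / 2) 1) :
    IsVolterraKernel (fractionalKernel α) := by
  have hα₀ : 0 < α := by linarith [hα.1]
  have hα₁ : α - 1 ≤ 0 := by linarith [hα.2]
  have hΓ : 0 < Real.Gamma α := Real.Gamma_pos_of_pos hα₀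
  refine ⟨fun t ht ↦ ?_, fun t ht ↦ div_pos (Real.rpow_pos_of_pos ht _) hΓ, fun s hs t _ hst ↦ ?_,
    locSqIntegrable_fractionalKernel hα.1, fun u t h hu hut hh ↦ ?_, ?_⟩
  · exact ((Real.continuousAt_rpow_const t _ (.inl ht.ne')).div_const _).continuousWithinAt
  · exact div_le_div_of_nonneg_right (Real.rpow_le_rpow_of_nonpos hs hst hα₁) hΓ.le
  · have ht : 0 < t := hu.trans_le hut
    simp only [fractionalKernel, div_mul_div_comm]
    rw [← Real.mul_rpow (by positivity) ht.le, ← Real.mul_rpow (by positivity) hu.le]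
    exact div_le_div_of_nonneg_right
      (Real.rpow_le_rpow_of_nonpos (by positivity) (by nlinarith) hα₁) (by positivity)
  · simp only [integral_fractionalKernel hα₀]
    exact ((tendsto_rpow_atTop hα₀).atTop_div_const hα₀).atTop_div_const hΓ

lemma laplaceTransform_fractionalKernel_ofReal (hα : 0 < α) {r : ℝ} (hr : 0 < r) :
    laplaceTransform (fractionalKernel α) r = ((r : ℂ) ^ (α : ℂ))⁻¹ := by
  have hΓ : Real.Gamma α ≠ 0 := (Real.Gamma_pos_of_pos hα).ne'
  calc laplaceTransform (fractionalKernel α) r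
    _ = ((∫ t in Ioi (0 : ℝ), t ^ (α - 1) * Real.exp (-(r * t))) / Real.Gamma α : ℝ) := by
      rw [← integral_div, ← integral_complex_ofReal]
      refine integral_congr_ae (ae_of_all _ fun t ↦ ?_)
      simp only [fractionalKernel]
      push_cast
      rw [neg_mul]
      ring
    _ = ((r : ℂ) ^ (α : ℂ))⁻¹ := by
      rw [Real.integral_rpow_mul_exp_neg_mul_Ioi hα hr, mul_div_cancel_right₀ _ hΓ, one_div,
        Real.inv_rpow hr.le, Complex.ofReal_inv, Complex.ofReal_cpow hr.le]

lemma laplaceTransform_fractionalKernel (hα : α ∈ Ioo (1 / 2) 1) {z : ℂ} (hz : 0 < z.re) :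
    laplaceTransform (fractionalKernel α) z = (z ^ (α : ℂ))⁻¹ := by
  have hα₀ : 0 < α := by linarith [hα.1]
  have h_cpow : AnalyticOnNhd ℂ (fun z : ℂ ↦ (z ^ (α : ℂ))⁻¹) {z | 0 < z.re} := fun w hw ↦ by
    have hw₀ : w ≠ 0 := fun h ↦ by simp [h] at hw
    exact (analyticAt_id.cpow analyticAt_const (.inl hw)).inv (by simp [hw₀])
  refine (isVolterraKernel_fractionalKernel hα).analyticOnNhd_laplaceTransform
    |>.eqOn_of_preconnected_of_frequently_eq h_cpow (convex_halfSpace_re_gt 0).isPreconnected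
      (z₀ := 1) (by simp) ?_ hz
  have h_tendsto : Tendsto (fun x : ℝ ↦ (x : ℂ)) (𝓝[>] 1) (𝓝[≠] 1) := by
    refine tendsto_nhdsWithin_iff.2 ⟨?_, ?_⟩
    · exact (Complex.continuous_ofReal.tendsto' 1 1 Complex.ofReal_one).mono_left inf_le_left
    · filter_upwards [self_mem_nhdsWithin] with x hx
      simpa using ne_of_gt (mem_Ioi.1 hx)
  refine h_tendsto.frequently (Eventually.frequently ?_)
  filter_upwards [self_mem_nhdsWithin] with x hx
  exact laplaceTransform_fractionalKernel_ofReal hα₀ (one_pos.trans hx)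

lemma norm_ofReal_mul_I_cpow_add_sq (hα : 0 < α) (y c : ℝ) :
    ‖(y * Complex.I) ^ (α : ℂ) + c‖ ^ 2 =
      c ^ 2 + 2 * c * |y| ^ α * Real.cos (Real.pi * α / 2) + |y| ^ (2 * α) := by
  have h_norm : ‖(y * Complex.I) ^ (α : ℂ)‖ ^ 2 = |y| ^ (2 * α) := by
    rw [Complex.norm_cpow_real, ← Real.rpow_mul_natCast (norm_nonneg _)]
    simp [mul_comm]
  have h_re : ((y * Complex.I) ^ (α : ℂ)).re = |y| ^ α * Real.cos (Real.pi * α / 2) := by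
    rw [Complex.cpow_ofReal_re, norm_mul, Complex.norm_I, mul_one, Complex.norm_real,
      Real.norm_eq_abs]
    rcases lt_trichotomy y 0 with hy | rfl | hy
    · rw [show (y : ℂ) * Complex.I = (-y : ℝ) * -Complex.I by push_cast; ring,
        Complex.arg_real_mul _ (neg_pos.2 hy), Complex.arg_neg_I, ← Real.cos_neg]
      ring_nf
    · simp [Real.zero_rpow hα.ne']
    · rw [Complex.arg_real_mul _ hy, Complex.arg_I]
      ring_nf
  have h_expand : ‖(y * Complex.I) ^ (α : ℂ) + c‖ ^ 2 =
      ‖(y * Complex.I) ^ (α : ℂ)‖ ^ 2 + 2 * ((y * Complex.I) ^ (α : ℂ)).re * c + c ^ 2 := by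
    simp only [Complex.sq_norm, Complex.normSq_apply, Complex.add_re, Complex.add_im,
      Complex.ofReal_re, Complex.ofReal_im, add_zero]
    ring
  rw [h_expand, h_norm, h_re]
  ring

/-- The function `u ↦ 1 / (1 + 2 |u|^α cos (π α / 2) + |u|^{2 α})`, the squared modulus of the
Fourier transform of the resolvent `E₋₁` up to scaling; its integral over `ℝ` is `2 π C_α`. -/
def spectralDensity (α u : ℝ) : ℝ :=
  1 / (1 + 2 * |u| ^ α * Real.cos (Real.pi * α / 2) + |u| ^ (2 * α))

lemma one_add_abs_rpow_le (hα : α ∈ Icc 0 1) (u : ℝ) : 1 + |u| ^ (2 * α) ≤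
    1 + 2 * |u| ^ α * Real.cos (Real.pi * α / 2) + |u| ^ (2 * α) := by
  have h_cos : 0 ≤ Real.cos (Real.pi * α / 2) := Real.cos_nonneg_of_mem_Icc
    ⟨by nlinarith [Real.pi_pos, hα.1], by nlinarith [Real.pi_pos, hα.2]⟩
  linarith [show 0 ≤ 2 * |u| ^ α * Real.cos (Real.pi * α / 2) by positivity]

lemma spectralDensity_pos (hα : α ∈ Icc 0 1) (u : ℝ) : 0 < spectralDensity α u :=
  one_div_pos.2 (lt_of_lt_of_le (by positivity) (one_add_abs_rpow_le hα u))

lemma integrable_spectralDensity (hα : α ∈ Ioo (1 / 2) 1) : Integrable (spectralDensity α) := by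
  have hα' : α ∈ Icc 0 1 := ⟨by linarith [hα.1], hα.2.le⟩
  have h_meas : Measurable (spectralDensity α) := by
    unfold spectralDensity
    fun_prop
  have h_bound : Integrable fun u : ℝ ↦ (1 + ‖u‖ ^ 2) ^ (-(2 * α) / 2) :=
    integrable_rpow_neg_one_add_norm_sq (by simpa using by linarith [hα.1])
  refine h_bound.mono' h_meas.aestronglyMeasurable (ae_of_all _ fun u ↦ ?_)
  rw [Real.norm_of_nonneg (spectralDensity_pos hα' u).le, spectralDensity, one_div,
    show -(2 * α) / 2 = -α by ring, Real.rpow_neg (by positivity)]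
  refine inv_anti₀ (by positivity) (le_trans ?_ (one_add_abs_rpow_le hα' u))
  refine (Real.rpow_add_le_add_rpow zero_le_one (by positivity) hα'.1 hα'.2).trans_eq ?_
  rw [Real.one_rpow, Real.norm_eq_abs, ← Real.rpow_natCast_mul (abs_nonneg u), Nat.cast_ofNat]

lemma integral_spectralDensity : ∫ u, spectralDensity α u = 2 * Real.pi * Calpha α := by
  have h_abs := integral_comp_abs (f := fun u : ℝ ↦
    1 / (1 + 2 * u ^ α * Real.cos (Real.pi * α / 2) + u ^ (2 * α)))
  simp only [spectralDensity, h_abs, Calpha]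
  rw [mul_assoc, ← mul_assoc Real.pi, mul_one_div_cancel Real.pi_ne_zero, one_mul]

lemma Calpha_pos (hα : α ∈ Ioo (1 / 2) 1) : 0 < Calpha α := by
  have hα' : α ∈ Icc 0 1 := ⟨by linarith [hα.1], hα.2.le⟩
  have h_pos : 0 < ∫ u, spectralDensity α u := by
    rw [integral_pos_iff_support_of_nonneg (fun u ↦ (spectralDensity_pos hα' u).le)
      (integrable_spectralDensity hα),
      Function.support_eq_univ fun u ↦ (spectralDensity_pos hα' u).ne']
    simp
  rw [integral_spectralDensity] at h_pos
  exact pos_of_mul_pos_right h_pos (by positivity)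

variable {β : ℝ} {E : ℝ → ℝ}

namespace SolvesResolventEq

lemma laplaceTransform_mul_cpow_sub (hE : SolvesResolventEq (fractionalKernel α) β E)
    (hα : α ∈ Ioo (1 / 2) 1) (hβ : β < 0) {z : ℂ} (hz : 0 ≤ z.re) :
    laplaceTransform E z * (z ^ (α : ℂ) + (-β : ℝ)) = 1 := by
  have hα₀ : 0 < α := by linarith [hα.1]
  have hK := isVolterraKernel_fractionalKernel hα
  have h_cpow : Continuous fun z : {z : ℂ // 0 ≤ z.re} ↦ (z : ℂ) ^ (α : ℂ) :=
    continuous_iff_continuousAt.2 fun z ↦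
      (Complex.continuousAt_cpow_const_of_re_pos (.inl z.2) hα₀).comp continuousAt_subtype_val
  have h_cont : ContinuousOn (fun z ↦ laplaceTransform E z * (z ^ (α : ℂ) + (-β : ℝ)))
      {z | 0 ≤ z.re} :=
    (continuousOn_laplaceTransform (hE.integrableOn hK hβ)).mul
      ((continuousOn_iff_continuous_domRestrict.2 h_cpow).add continuousOn_const)
  have h_open : EqOn (fun z ↦ laplaceTransform E z * (z ^ (α : ℂ) + (-β : ℝ))) 1
      {z | 0 < z.re} := fun z (hz : 0 < z.re) ↦ by
    have hz₀ : z ≠ 0 := fun h ↦ by simp [h] at hz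
    have h_ne : z ^ (α : ℂ) ≠ 0 := by simp [hz₀]
    have h_eq := hE.laplaceTransform_eq hK hβ hz
    rw [laplaceTransform_fractionalKernel hα hz] at h_eq
    field_simp at h_eq
    simp only [Pi.one_apply, Complex.ofReal_neg]
    linear_combination h_eq
  exact h_open.of_subset_closure h_cont continuousOn_const (fun _ ↦ le_of_lt (α := ℝ))
    (Complex.closure_setOfPred_lt_re 0).ge hz

lemma norm_laplaceTransform_mul_I_sq (hE : SolvesResolventEq (fractionalKernel α) β E)
    (hα : α ∈ Ioo (1 / 2) 1) (hβ : β < 0) (y : ℝ) :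
    ‖laplaceTransform E (y * Complex.I)‖ ^ 2 =
      (-β) ^ (-2 : ℝ) * spectralDensity α ((-β) ^ (-1 / α) * y) := by
  have hα₀ : 0 < α := by linarith [hα.1]
  have hβ' : 0 < -β := neg_pos.2 hβ
  have h_rpow (p : ℝ) : |(-β) ^ (-1 / α) * y| ^ (p * α) = (-β) ^ (-p) * |y| ^ (p * α) := by
    rw [abs_mul, abs_of_pos (by positivity), Real.mul_rpow (by positivity) (abs_nonneg y),
      ← Real.rpow_mul hβ'.le]
    congr 2
    field_simp
  have h_den := norm_ofReal_mul_I_cpow_add_sq hα₀ y (-β)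
  have h_prod := congrArg (‖·‖ ^ 2)
    (hE.laplaceTransform_mul_cpow_sub hα hβ (z := y * Complex.I) (by simp))
  simp only [norm_mul, mul_pow, norm_one, one_pow] at h_prod
  have h_rpow_one := h_rpow 1
  rw [one_mul, Real.rpow_neg_one] at h_rpow_one
  have h_rpow_two := h_rpow 2
  rw [Real.rpow_neg hβ'.le, Real.rpow_two] at h_rpow_two
  rw [eq_one_div_of_mul_eq_one_left h_prod, h_den, spectralDensity, h_rpow_one, h_rpow_two,
    Real.rpow_neg hβ'.le, Real.rpow_two, ← one_div, one_div_mul_one_div]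
  congr 1
  have hβ₀ : β ≠ 0 := hβ.ne
  field_simp

lemma integral_Ioi_sq (hE : SolvesResolventEq (fractionalKernel α) β E)
    (hα : α ∈ Ioo (1 / 2) 1) (hβ : β < 0) :
    ∫ t in Ioi 0, E t ^ 2 = Calpha α * (-β) ^ (1 / α - 2) := by
  have hK := isVolterraKernel_fractionalKernel hα
  have hβ' : 0 < -β := neg_pos.2 hβ
  set f : ℝ → ℂ := (Ioi 0).indicator fun t ↦ (E t : ℂ) with hf
  have h_fourier (ξ : ℝ) : ‖FourierTransform.fourier f ξ‖ ^ 2 =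
      (-β) ^ (-2 : ℝ) * spectralDensity α ((-β) ^ (-1 / α) * (2 * Real.pi) * ξ) := by
    rw [fourier_indicator_Ioi, hE.norm_laplaceTransform_mul_I_sq hα hβ, mul_assoc ((-β) ^ _)]
  have h_scale : 0 < (-β) ^ (-1 / α) * (2 * Real.pi) := by positivity
  have hE_int := hE.integrableOn hK hβ
  have hf_int : Integrable f := (integrable_indicator_iff measurableSet_Ioi).2 hE_int.ofReal
  have hf_memLp : MemLp f 2 := by
    rw [hf, memLp_indicator_iff_restrict measurableSet_Ioi]
    exact ((memLp_two_iff_integrable_sq hE_int.aestronglyMeasurable).2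
      (hE.integrableOn_sq hK hβ)).ofReal
  have h_plancherel := integral_norm_sq_eq_integral_norm_fourier_sq hf_int hf_memLp (by
      simp only [h_fourier]
      exact ((integrable_spectralDensity hα).comp_mul_left' h_scale.ne').const_mul _)
  calc ∫ t in Ioi 0, E t ^ 2
    _ = ∫ t, ‖f t‖ ^ 2 := by
      rw [← integral_indicator measurableSet_Ioi]
      congr 1 with t
      by_cases ht : t ∈ Ioi 0 <;> simp [hf, ht]
    _ = (-β) ^ (-2 : ℝ) * (((-β) ^ (-1 / α) * (2 * Real.pi))⁻¹ * (2 * Real.pi * Calpha α)) := by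
      rw [h_plancherel]
      simp only [h_fourier]
      rw [integral_const_mul, Measure.integral_comp_mul_left (spectralDensity α),
        integral_spectralDensity, abs_of_pos (inv_pos.2 h_scale), smul_eq_mul]
    _ = Calpha α * (-β) ^ (1 / α - 2) := by
      rw [sub_eq_add_neg, Real.rpow_add hβ', neg_div, Real.rpow_neg hβ'.le (1 / α)]
      field_simp

end SolvesResolventEq

end FractionalKernel

section Autocorrelation

open ComplexConjugate Convolution

variable {f : ℝ → ℝ}

lemma integrable_integral_inner_comp_add (hf : Integrable f) :
    Integrable fun x ↦ ∫ r, inner ℝ (f r) (f (x + r)) :=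
  (hf.integrable_convolution (ContinuousLinearMap.mul ℝ ℝ) hf.comp_neg).congr
    (.of_forall fun x ↦ convolution_conj_comp_neg f x)

lemma integral_integral_inner_comp_add (hf : Integrable f) :
    ∫ x, ∫ r, inner ℝ (f r) (f (x + r)) = (∫ x, f x) ^ 2 := by
  have h_conv := integral_convolution (ContinuousLinearMap.mul ℝ ℝ) (μ := volume) (ν := volume)
    hf hf.comp_neg
  rw [ContinuousLinearMap.mul_apply', integral_neg_eq_self, ← sq] at h_conv
  rw [← h_conv]
  exact integral_congr_ae (.of_forall fun x ↦ (convolution_conj_comp_neg f x).symm)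

lemma integral_inner_indicator_Ioi_comp_add (f : ℝ → ℝ) (x : ℝ) :
    ∫ r, inner ℝ ((Ioi 0).indicator f r) ((Ioi 0).indicator f (x + r)) =
      ∫ r in Ioi 0, f (|x| + r) * f r := by
  wlog hx : 0 ≤ x generalizing x
  · rw [← abs_neg x, ← this (-x) (by linarith), ← integral_add_left_eq_self _ (-x)]
    congr 1 with r
    rw [add_neg_cancel_left, real_inner_comm]
  rw [abs_of_nonneg hx, ← integral_indicator measurableSet_Ioi]
  congr 1 with r
  by_cases hr : r ∈ Ioi (0 : ℝ)
  · rw [indicator_of_mem hr, indicator_of_mem hr,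
      indicator_of_mem (mem_Ioi.2 (add_pos_of_nonneg_of_pos hx hr)), Real.inner_apply,
      mul_comm]
  · rw [indicator_of_notMem hr, indicator_of_notMem hr, inner_zero_left]

lemma integrableOn_comp_add_mul (hf : MemLp f 2 (volume.restrict (Ioi 0))) {x : ℝ} (hx : 0 ≤ x) :
    IntegrableOn (fun r ↦ f (x + r) * f r) (Ioi 0) := by
  have h_ind := (memLp_indicator_iff_restrict measurableSet_Ioi).2 hf
  refine (((h_ind.comp_measurePreserving (measurePreserving_add_left volume x)).integrable_mul
    h_ind).integrableOn).congr_fun (fun r hr ↦ ?_) measurableSet_Ioi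
  simp only [Pi.mul_apply, Function.comp_apply, indicator_of_mem hr,
    indicator_of_mem (mem_Ioi.2 (add_pos_of_nonneg_of_pos hx hr))]

end Autocorrelation

section Moments

variable {K : ℝ → ℝ} {E : ℝ → ℝ → ℝ} {β : ℝ}

lemma covVOU_comm (E : ℝ → ℝ → ℝ) (σ β s t : ℝ) : covVOU E σ β s t = covVOU E σ β t s := by
  rw [covVOU, covVOU, min_comm, abs_sub_comm]

lemma covStatVOU_eq_zero_sub (E : ℝ → ℝ → ℝ) (σ β s t : ℝ) :
    covStatVOU E σ β s t = covStatVOU E σ β 0 (t - s) := by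
  rw [covStatVOU, covStatVOU, sub_zero]

lemma covStatVOU_zero_eq_integral_inner (E : ℝ → ℝ → ℝ) (σ β x : ℝ) :
    covStatVOU E σ β 0 x = σ ^ 2 *
      ∫ r, inner ℝ ((Ioi 0).indicator (E β) r) ((Ioi 0).indicator (E β) (x + r)) := by
  rw [covStatVOU, sub_zero, integral_inner_indicator_Ioi_comp_add]

lemma covVOU_self (E : ℝ → ℝ → ℝ) (σ β t : ℝ) :
    covVOU E σ β t t = σ ^ 2 * ∫ r in (0 : ℝ)..t, E β r ^ 2 := by
  simp only [covVOU, sub_self, abs_zero, zero_add, min_self, sq]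

namespace SolvesResolventEq

lemma memLp_two (hE : SolvesResolventEq K β (E β)) (hK : IsVolterraKernel K) (hβ : β < 0) :
    MemLp (E β) 2 (volume.restrict (Ioi 0)) :=
  (memLp_two_iff_integrable_sq (hE.integrableOn hK hβ).aestronglyMeasurable).2
    (hE.integrableOn_sq hK hβ)

lemma comp_add_mul_nonneg (hE : SolvesResolventEq K β (E β)) (hK : IsVolterraKernel K) (hβ : β < 0)
    {x r : ℝ} (hx : 0 ≤ x) (hr : 0 < r) : 0 ≤ E β (x + r) * E β r :=
  mul_nonneg (hE.pos hK hβ _ (add_pos_of_nonneg_of_pos hx hr)).le (hE.pos hK hβ r hr).le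

lemma covVOU_nonneg (hE : SolvesResolventEq K β (E β)) (hK : IsVolterraKernel K) (hβ : β < 0)
    (σ : ℝ) {s t : ℝ} (hs : 0 ≤ s) (ht : 0 ≤ t) : 0 ≤ covVOU E σ β s t := by
  rw [covVOU, intervalIntegral.integral_of_le (le_min hs ht)]
  exact mul_nonneg (sq_nonneg σ) (setIntegral_nonneg measurableSet_Ioc fun r hr ↦
    hE.comp_add_mul_nonneg hK hβ (abs_nonneg _) hr.1)

lemma covVOU_le_covStatVOU (hE : SolvesResolventEq K β (E β)) (hK : IsVolterraKernel K)
    (hβ : β < 0) (σ : ℝ) {s t : ℝ} (hs : 0 ≤ s) (ht : 0 ≤ t) :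
    covVOU E σ β s t ≤ covStatVOU E σ β s t := by
  rw [covVOU, intervalIntegral.integral_of_le (le_min hs ht)]
  refine mul_le_mul_of_nonneg_left (setIntegral_mono_set
    (integrableOn_comp_add_mul (hE.memLp_two hK hβ) (abs_nonneg _)) ?_
    Ioc_subset_Ioi_self.eventuallyLE) (sq_nonneg σ)
  filter_upwards [ae_restrict_mem measurableSet_Ioi] with r hr
  exact hE.comp_add_mul_nonneg hK hβ (abs_nonneg _) hr

lemma covStatVOU_nonneg (hE : SolvesResolventEq K β (E β)) (hK : IsVolterraKernel K)
    (hβ : β < 0) (σ s t : ℝ) : 0 ≤ covStatVOU E σ β s t :=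
  mul_nonneg (sq_nonneg σ) (setIntegral_nonneg measurableSet_Ioi fun _ hr ↦
    hE.comp_add_mul_nonneg hK hβ (abs_nonneg _) hr)

lemma integral_Ioi_comp_add_sq_le (hE : SolvesResolventEq K β (E β)) (hK : IsVolterraKernel K)
    (hβ : β < 0) {x : ℝ} (hx : 0 ≤ x) :
    IntegrableOn (fun r ↦ E β (x + r) ^ 2) (Ioi 0) ∧
      ∫ r in Ioi 0, E β (x + r) ^ 2 ≤ ∫ r in Ioi 0, E β r ^ 2 := by
  have h_shift : MeasurePreserving (fun r ↦ x + r) (volume.restrict (Ioi 0))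
      (volume.restrict (Ioi x)) := by
    simpa using (measurePreserving_add_left volume x).restrict_preimage (measurableSet_Ioi (a := x))
  have h_emb := measurableEmbedding_addLeft x
  have h_sq := hE.integrableOn_sq hK hβ
  refine ⟨(h_shift.integrable_comp_emb h_emb).2 (h_sq.mono_set (Ioi_subset_Ioi hx)), ?_⟩
  rw [h_shift.integral_comp h_emb fun r ↦ E β r ^ 2]
  exact setIntegral_mono_set h_sq (.of_forall fun _ ↦ sq_nonneg _)
    (Ioi_subset_Ioi hx).eventuallyLE

lemma covStatVOU_le_mvarVOU (hE : SolvesResolventEq K β (E β)) (hK : IsVolterraKernel K)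
    (hβ : β < 0) (σ s t : ℝ) : covStatVOU E σ β s t ≤ mvarVOU E σ β := by
  obtain ⟨h_int, h_le⟩ := hE.integral_Ioi_comp_add_sq_le hK hβ (abs_nonneg (t - s))
  have h_sq := hE.integrableOn_sq hK hβ
  refine mul_le_mul_of_nonneg_left ?_ (sq_nonneg σ)
  calc ∫ r in Ioi 0, E β (|t - s| + r) * E β r
      ≤ ∫ r in Ioi 0, (E β (|t - s| + r) ^ 2 + E β r ^ 2) / 2 :=
        integral_mono (integrableOn_comp_add_mul (hE.memLp_two hK hβ) (abs_nonneg _))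
          ((h_int.add h_sq).div_const 2) fun r ↦ by
            linarith [two_mul_le_add_sq (E β (|t - s| + r)) (E β r)]
    _ ≤ ∫ r in Ioi 0, E β r ^ 2 := by
        rw [integral_div, integral_add h_int h_sq]
        linarith

lemma integrable_covStatVOU (hE : SolvesResolventEq K β (E β)) (hK : IsVolterraKernel K)
    (hβ : β < 0) (σ : ℝ) : Integrable (covStatVOU E σ β 0) :=
  ((integrable_integral_inner_comp_add ((integrable_indicator_iff measurableSet_Ioi).2
    (hE.integrableOn hK hβ))).const_mul (σ ^ 2)).congr
    (.of_forall fun x ↦ (covStatVOU_zero_eq_integral_inner E σ β x).symm)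

lemma integral_covStatVOU (hE : SolvesResolventEq K β (E β)) (hK : IsVolterraKernel K)
    (hβ : β < 0) (σ : ℝ) : ∫ x, covStatVOU E σ β 0 x = σ ^ 2 * (-β)⁻¹ ^ 2 := by
  simp_rw [covStatVOU_zero_eq_integral_inner]
  rw [integral_const_mul, integral_integral_inner_comp_add
    ((integrable_indicator_iff measurableSet_Ioi).2 (hE.integrableOn hK hβ)),
    integral_indicator measurableSet_Ioi, hE.integral_Ioi hK hβ]

end SolvesResolventEq

end Moments

section Asymptotics

variable {K : ℝ → ℝ} {E : ℝ → ℝ → ℝ} {β : ℝ}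

lemma meanVOU_sub_div (E : ℝ → ℝ → ℝ) (x₀ b t : ℝ) (hβ : β ≠ 0) :
    meanVOU E x₀ b β t - b / -β = (1 + β * ∫ s in (0 : ℝ)..t, E β s) * (x₀ - b / -β) := by
  rw [meanVOU]
  field

lemma IsVolterraKernel.tendsto_inv_one_add_mul_integral (hK : IsVolterraKernel K)
    {θ : ℝ × ℝ} (hθ : θ.2 < 0) :
    Tendsto (fun p : ℝ × ℝ × ℝ ↦ (1 + -p.2.2 * ∫ s in (0 : ℝ)..p.1, K s)⁻¹) (atTop ×ˢ 𝓝 θ)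
      (𝓝 0) := by
  have h_drift : Tendsto (fun p : ℝ × ℝ × ℝ ↦ -p.2.2) (atTop ×ˢ 𝓝 θ) (𝓝 (-θ.2)) :=
    ((continuous_snd.tendsto θ).comp tendsto_snd).neg
  exact tendsto_inv_atTop_zero.comp (tendsto_atTop_add_const_left _ _
    (h_drift.pos_mul_atTop (neg_pos.2 hθ) (hK.tendsto_integral.comp tendsto_fst)))

lemma eventually_snd_neg {θ : ℝ × ℝ} (hθ : θ.2 < 0) : ∀ᶠ θ' in 𝓝 θ, θ'.2 < 0 :=
  (continuous_snd.tendsto θ).eventually_lt_const hθ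

lemma tendsto_div_neg {θ : ℝ × ℝ} (hθ : θ.2 < 0) :
    Tendsto (fun θ' : ℝ × ℝ ↦ θ'.1 / -θ'.2) (𝓝 θ) (𝓝 (θ.1 / -θ.2)) :=
  (continuous_fst.tendsto θ).div (continuous_snd.tendsto θ).neg (neg_ne_zero.2 hθ.ne)

namespace SolvesResolventEq

lemma abs_meanVOU_sub_le (hE : SolvesResolventEq K β (E β)) (hK : IsVolterraKernel K)
    (hβ : β < 0) (x₀ b : ℝ) {t : ℝ} (ht : 0 < t) :
    |meanVOU E x₀ b β t - b / -β| ≤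
      (1 + -β * ∫ s in (0 : ℝ)..t, K s)⁻¹ * |x₀ - b / -β| := by
  rw [meanVOU_sub_div E x₀ b t hβ.ne, abs_mul,
    abs_of_nonneg (hE.one_add_mul_integral_nonneg hK hβ ht)]
  exact mul_le_mul_of_nonneg_right (hE.one_add_mul_integral_le hK hβ ht) (abs_nonneg _)

lemma abs_meanVOU_le (hE : SolvesResolventEq K β (E β)) (hK : IsVolterraKernel K)
    (hβ : β < 0) (x₀ b : ℝ) {t : ℝ} (ht : 0 < t) :
    |meanVOU E x₀ b β t| ≤ |b / -β| + |x₀ - b / -β| := by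
  have h_inv_le : (1 + -β * ∫ s in (0 : ℝ)..t, K s)⁻¹ ≤ 1 :=
    inv_le_one_of_one_le₀ (le_add_of_nonneg_right
      (mul_nonneg (neg_nonneg.2 hβ.le) (hK.integral_nonneg ht.le)))
  calc |meanVOU E x₀ b β t|
      ≤ |b / -β| + |meanVOU E x₀ b β t - b / -β| := by
        simpa only [add_sub_cancel] using abs_add_le (b / -β) (meanVOU E x₀ b β t - b / -β)
    _ ≤ |b / -β| + |x₀ - b / -β| := by
        exact add_le_add_right ((hE.abs_meanVOU_sub_le hK hβ x₀ b ht).trans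
          (mul_le_of_le_one_left (abs_nonneg _) h_inv_le)) _

lemma covVOU_self_le (hE : SolvesResolventEq K β (E β)) (hK : IsVolterraKernel K)
    (hβ : β < 0) (σ : ℝ) {t : ℝ} (ht : 0 ≤ t) : covVOU E σ β t t ≤ mvarVOU E σ β :=
  (hE.covVOU_le_covStatVOU hK hβ σ ht ht).trans (hE.covStatVOU_le_mvarVOU hK hβ σ t t)

lemma mvarVOU_sub_covVOU_le (hE : SolvesResolventEq K β (E β)) (hK : IsVolterraKernel K)
    (hβ : β < 0) (σ : ℝ) {t : ℝ} (ht : 1 ≤ t) :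
    mvarVOU E σ β - covVOU E σ β t t ≤
      σ ^ 2 * K 1 * (-β)⁻¹ * (1 + -β * ∫ s in (0 : ℝ)..t, K s)⁻¹ := by
  have ht₀ : 0 < t := one_pos.trans_le ht
  have h_split := intervalIntegral.integral_interval_add_Ioi (hE.integrableOn_sq hK hβ)
    ((hE.integrableOn_sq hK hβ).mono_set (Ioi_subset_Ioi ht₀.le))
  have h_tail : ∫ r in Ioi t, E β r ≤ (-β)⁻¹ * (1 + -β * ∫ s in (0 : ℝ)..t, K s)⁻¹ := by
    rw [inv_mul_eq_div, le_div_iff₀' (neg_pos.2 hβ), hE.integral_Ioi_gt hK hβ ht₀.le]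
    exact hE.one_add_mul_integral_le hK hβ ht₀
  calc mvarVOU E σ β - covVOU E σ β t t = σ ^ 2 * ∫ r in Ioi t, E β r ^ 2 := by
        rw [mvarVOU, covVOU_self, ← h_split]
        ring
    _ ≤ σ ^ 2 * (K 1 * ((-β)⁻¹ * (1 + -β * ∫ s in (0 : ℝ)..t, K s)⁻¹)) := by
        gcongr
        refine (hE.integral_Ioi_sq_le hK hβ ht₀).trans (mul_le_mul
          (hK.antitoneOn (mem_Ioi.2 one_pos) ht₀ ht) h_tail ?_ (hK.pos 1 one_pos).le)
        exact setIntegral_nonneg measurableSet_Ioi fun r hr ↦ (hE.pos hK hβ r (ht₀.trans hr)).le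
    _ = _ := by ring

lemma mvarVOU_eq {α : ℝ} (hE : SolvesResolventEq (fractionalKernel α) β (E β))
    (hα : α ∈ Ioo (1 / 2) 1) (hβ : β < 0) (σ : ℝ) :
    mvarVOU E σ β = σ ^ 2 * (Calpha α * (-β) ^ (1 / α - 2)) := by
  rw [mvarVOU, hE.integral_Ioi_sq hα hβ]

end SolvesResolventEq

lemma tendsto_meanVOU (hE : ∀ β < 0, SolvesResolventEq K β (E β)) (hK : IsVolterraKernel K)
    (x₀ : ℝ) {θ : ℝ × ℝ} (hθ : θ.2 < 0) :
    Tendsto (fun p : ℝ × ℝ × ℝ ↦ meanVOU E x₀ p.2.1 p.2.2 p.1) (atTop ×ˢ 𝓝 θ)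
      (𝓝 (θ.1 / -θ.2)) := by
  have h_div := (tendsto_div_neg hθ).comp (tendsto_snd (f := atTop (α := ℝ)))
  have h_bound := (hK.tendsto_inv_one_add_mul_integral hθ).mul (h_div.const_sub x₀).abs
  rw [zero_mul] at h_bound
  have h_diff : Tendsto (fun p : ℝ × ℝ × ℝ ↦ meanVOU E x₀ p.2.1 p.2.2 p.1 - p.2.1 / -p.2.2)
      (atTop ×ˢ 𝓝 θ) (𝓝 0) := by
    refine squeeze_zero_norm' ?_ h_bound
    filter_upwards [(eventually_gt_atTop 0).prod_mk (eventually_snd_neg hθ)] with p ⟨ht, hβ⟩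
    exact (hE _ hβ).abs_meanVOU_sub_le hK hβ x₀ _ ht
  simpa using h_diff.add h_div

lemma tendsto_covVOU_self (hE : ∀ β < 0, SolvesResolventEq K β (E β)) (hK : IsVolterraKernel K)
    (σ : ℝ) {θ : ℝ × ℝ} (hθ : θ.2 < 0)
    (h_mvar : Tendsto (fun θ' : ℝ × ℝ ↦ mvarVOU E σ θ'.2) (𝓝 θ) (𝓝 (mvarVOU E σ θ.2))) :
    Tendsto (fun p : ℝ × ℝ × ℝ ↦ covVOU E σ p.2.2 p.1 p.1) (atTop ×ˢ 𝓝 θ)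
      (𝓝 (mvarVOU E σ θ.2)) := by
  have h_lim := h_mvar.comp (tendsto_snd (f := atTop (α := ℝ)))
  have h_inv : Tendsto (fun p : ℝ × ℝ × ℝ ↦ (-p.2.2)⁻¹) (atTop ×ˢ 𝓝 θ) (𝓝 (-θ.2)⁻¹) :=
    (((continuous_snd.tendsto θ).comp tendsto_snd).neg).inv₀ (neg_ne_zero.2 hθ.ne)
  have h_bound := (h_inv.const_mul (σ ^ 2 * K 1)).mul (hK.tendsto_inv_one_add_mul_integral hθ)
  rw [mul_zero] at h_bound
  have h_diff : Tendsto (fun p : ℝ × ℝ × ℝ ↦ mvarVOU E σ p.2.2 - covVOU E σ p.2.2 p.1 p.1)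
      (atTop ×ˢ 𝓝 θ) (𝓝 0) := by
    refine squeeze_zero' ?_ ?_ h_bound
    all_goals
      filter_upwards [(eventually_ge_atTop 1).prod_mk (eventually_snd_neg hθ)] with p ⟨ht, hβ⟩
    · exact sub_nonneg.2 ((hE _ hβ).covVOU_self_le hK hβ σ (zero_le_one.trans ht))
    · exact (hE _ hβ).mvarVOU_sub_covVOU_le hK hβ σ ht
  simpa using h_lim.sub h_diff

lemma tendsto_mvarVOU {α : ℝ} (hE : ∀ β < 0, SolvesResolventEq (fractionalKernel α) β (E β))
    (hα : α ∈ Ioo (1 / 2) 1) (σ : ℝ) {θ : ℝ × ℝ} (hθ : θ.2 < 0) :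
    Tendsto (fun θ' : ℝ × ℝ ↦ mvarVOU E σ θ'.2) (𝓝 θ) (𝓝 (mvarVOU E σ θ.2)) := by
  rw [(hE _ hθ).mvarVOU_eq hα hθ]
  have h_rpow := (continuous_snd.tendsto θ).neg.rpow_const (p := 1 / α - 2)
    (.inl (neg_ne_zero.2 hθ.ne))
  refine ((h_rpow.const_mul (Calpha α)).const_mul (σ ^ 2)).congr' ?_
  filter_upwards [eventually_snd_neg hθ] with θ' hβ
  exact ((hE _ hβ).mvarVOU_eq hα hβ σ).symm

end Asymptotics

section GaussianMoments

open ProbabilityTheory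

lemma iteratedDeriv_add_two_mgf_gaussianReal (μ : ℝ) (v : ℝ≥0) (n : ℕ) :
    iteratedDeriv (n + 2) (mgf id (gaussianReal μ v)) = fun t ↦
      (μ + v * t) * iteratedDeriv (n + 1) (mgf id (gaussianReal μ v)) t +
        (n + 1) * v * iteratedDeriv n (mgf id (gaussianReal μ v)) t := by
  set M := mgf id (gaussianReal μ v)
  have h_smooth : ContDiff ℝ ⊤ M := by
    rw [show M = _ from mgf_id_gaussianReal]
    fun_prop
  have h_iter (k : ℕ) (t : ℝ) : HasDerivAt (iteratedDeriv k M) (iteratedDeriv (k + 1) M t) t := by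
    rw [iteratedDeriv_succ]
    exact (h_smooth.differentiable_iteratedDeriv k (mod_cast WithTop.coe_lt_top _) t).hasDerivAt
  have h_slope (t : ℝ) : HasDerivAt (fun t ↦ μ + v * t) v t := by
    simpa using ((hasDerivAt_id t).const_mul (v : ℝ)).const_add μ
  induction n with
  | zero =>
    have h_deriv : iteratedDeriv 1 M = fun t ↦ (μ + v * t) * M t := by
      ext t
      have h_exponent : HasDerivAt (fun t : ℝ ↦ μ * t + v * t ^ 2 / 2) (μ + v * t) t := by
        refine (((hasDerivAt_id t).const_mul μ).add
          ((((hasDerivAt_id t).pow 2).const_mul (v : ℝ)).div_const 2)).congr_deriv ?_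
        simp only [id_eq]
        ring
      rw [iteratedDeriv_one, show M = _ from mgf_id_gaussianReal, h_exponent.exp.deriv, mul_comm]
    ext t
    rw [iteratedDeriv_succ, h_deriv]
    refine ((h_slope t).mul (h_iter 0 t)).deriv.trans ?_
    simp only [h_deriv, iteratedDeriv_zero]
    ring
  | succ n ih =>
    ext t
    rw [iteratedDeriv_succ]
    refine (congrFun (congrArg deriv ih) t).trans ?_
    refine (((h_slope t).mul (h_iter (n + 1) t)).add ((h_iter n t).const_mul _)).deriv.trans ?_
    push_cast
    ring

/-- The moment recursion obtained from Gaussian integration by parts. -/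
lemma integral_pow_add_two_gaussianReal (μ : ℝ) (v : ℝ≥0) (n : ℕ) :
    ∫ x, x ^ (n + 2) ∂gaussianReal μ v =
      μ * ∫ x, x ^ (n + 1) ∂gaussianReal μ v + (n + 1) * v * ∫ x, x ^ n ∂gaussianReal μ v := by
  have h_moment (k : ℕ) : ∫ x, x ^ k ∂gaussianReal μ v =
      iteratedDeriv k (mgf id (gaussianReal μ v)) 0 := by
    rw [iteratedDeriv_mgf_zero (by simp)]
    simp only [Pi.pow_apply, id_eq]
  rw [h_moment, h_moment, h_moment, iteratedDeriv_add_two_mgf_gaussianReal]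
  simp only [mul_zero, add_zero]

lemma integral_sq_gaussianReal (μ : ℝ) (v : ℝ≥0) :
    ∫ x, x ^ 2 ∂gaussianReal μ v = μ ^ 2 + v := by
  rw [integral_pow_add_two_gaussianReal μ v 0]
  simp only [zero_add, pow_one, pow_zero, integral_id_gaussianReal, integral_const, probReal_univ]
  simp [sq]

lemma integral_pow_four_gaussianReal (μ : ℝ) (v : ℝ≥0) :
    ∫ x, x ^ 4 ∂gaussianReal μ v = μ ^ 4 + 6 * μ ^ 2 * v + 3 * (v : ℝ) ^ 2 := by
  have h_cube : ∫ x, x ^ 3 ∂gaussianReal μ v = μ ^ 3 + 3 * μ * v := by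
    rw [integral_pow_add_two_gaussianReal μ v 1]
    simp only [Nat.reduceAdd, pow_one, integral_sq_gaussianReal, integral_id_gaussianReal]
    push_cast
    ring
  rw [integral_pow_add_two_gaussianReal μ v 2]
  simp only [Nat.reduceAdd, integral_sq_gaussianReal, h_cube]
  push_cast
  ring

end GaussianMoments

section GaussianProcess

open ProbabilityTheory

variable {Ω : Type*} [MeasurableSpace Ω] {P : Measure Ω}

/-- `f` is integrable with expectation `a`; stating both at once excludes the junk value of the
Bochner integral. -/
def HasExpectation (P : Measure Ω) (f : Ω → ℝ) (a : ℝ) : Prop :=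
  Integrable f P ∧ ∫ ω, f ω ∂P = a

namespace HasExpectation

variable {f g : Ω → ℝ} {a b k : ℝ}

lemma add (hf : HasExpectation P f a) (hg : HasExpectation P g b) :
    HasExpectation P (fun ω ↦ f ω + g ω) (a + b) :=
  ⟨hf.1.add hg.1, by rw [integral_add hf.1 hg.1, hf.2, hg.2]⟩

lemma sub (hf : HasExpectation P f a) (hg : HasExpectation P g b) :
    HasExpectation P (fun ω ↦ f ω - g ω) (a - b) :=
  ⟨hf.1.sub hg.1, by rw [integral_sub hf.1 hg.1, hf.2, hg.2]⟩

lemma const_mul (k : ℝ) (hf : HasExpectation P f a) :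
    HasExpectation P (fun ω ↦ k * f ω) (k * a) :=
  ⟨hf.1.const_mul k, by rw [integral_const_mul, hf.2]⟩

lemma congr (hf : HasExpectation P f a) (hfg : ∀ ω, f ω = g ω) (hab : a = b) :
    HasExpectation P g b := by
  rwa [← funext hfg, ← hab]

lemma sub_mul_sub [IsProbabilityMeasure P] (hf : HasExpectation P f a) (hg : HasExpectation P g b)
    (hfg : HasExpectation P (fun ω ↦ f ω * g ω) (a * b + k)) :
    HasExpectation P (fun ω ↦ (f ω - a) * (g ω - b)) k := by
  have h_const : HasExpectation P (fun _ ↦ a * b) (a * b) :=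
    ⟨integrable_const _, by rw [integral_const, probReal_univ, one_smul]⟩
  exact (((hfg.sub (hf.const_mul b)).sub (hg.const_mul a)).add h_const).congr
    (fun ω ↦ by ring) (by ring)

lemma pow_of_hasLaw_gaussianReal {W : Ω → ℝ} {μ : ℝ} {v : ℝ≥0} (hW : HasLaw W (gaussianReal μ v) P)
    (n : ℕ) : HasExpectation P (fun ω ↦ W ω ^ n) (∫ x, x ^ n ∂gaussianReal μ v) := by
  have h_pow : Integrable (fun x ↦ x ^ n) (P.map W) := by
    rw [hW.map_eq]
    exact integrable_pow_of_mem_interior_integrableExpSet (by simp) n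
  exact ⟨h_pow.comp_aemeasurable hW.aemeasurable,
    hW.integral_comp (f := fun x ↦ x ^ n) (by fun_prop)⟩

end HasExpectation

namespace IsGaussianProcessOn

variable {S : Set ℝ} {X : ℝ → Ω → ℝ} {m : ℝ → ℝ} {c : ℝ → ℝ → ℝ} {s t : ℝ}

lemma hasLaw_add_const_mul (hX : IsGaussianProcessOn P S X m c) (hs : s ∈ S) (ht : t ∈ S) (a : ℝ) :
    HasLaw (fun ω ↦ X s ω + a * X t ω) (gaussianReal (m s + a * m t)
      (c s s + a * c s t + a * c t s + a ^ 2 * c t t).toNNReal) P := by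
  have hX_s := hX.1 s
  have hX_t := hX.1 t
  refine ⟨by fun_prop, ?_⟩
  have h_law := hX.2 2 ![s, t] ![1, a] (by simp [Fin.forall_fin_two, hs, ht])
  simp only [Fin.sum_univ_two, Matrix.cons_val_zero, Matrix.cons_val_one, one_mul] at h_law
  rw [h_law]
  congr 2
  ring

lemma hasLaw (hX : IsGaussianProcessOn P S X m c) (ht : t ∈ S) :
    HasLaw (X t) (gaussianReal (m t) (c t t).toNNReal) P := by
  simpa using hX.hasLaw_add_const_mul ht ht 0

lemma hasExpectation (hX : IsGaussianProcessOn P S X m c) (ht : t ∈ S) :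
    HasExpectation P (X t) (m t) := by
  simpa [integral_id_gaussianReal] using HasExpectation.pow_of_hasLaw_gaussianReal (hX.hasLaw ht) 1

section NonnegCovariance

variable (hX : IsGaussianProcessOn P S X m c) (hc : ∀ s ∈ S, ∀ t ∈ S, 0 ≤ c s t)
  (hc_symm : ∀ s t, c s t = c t s)

include hX hc hc_symm

lemma hasExpectation_mul (hs : s ∈ S) (ht : t ∈ S) :
    HasExpectation P (fun ω ↦ X s ω * X t ω) (m s * m t + c s t) := by
  have h_s := HasExpectation.pow_of_hasLaw_gaussianReal (hX.hasLaw hs) 2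
  have h_t := HasExpectation.pow_of_hasLaw_gaussianReal (hX.hasLaw ht) 2
  have h_add := HasExpectation.pow_of_hasLaw_gaussianReal (hX.hasLaw_add_const_mul hs ht 1) 2
  have hc_ss := hc s hs s hs
  have hc_st := hc s hs t ht
  have hc_tt := hc t ht t ht
  rw [integral_sq_gaussianReal, Real.coe_toNNReal _ hc_ss] at h_s
  rw [integral_sq_gaussianReal, Real.coe_toNNReal _ hc_tt] at h_t
  rw [integral_sq_gaussianReal, ← hc_symm s t, Real.coe_toNNReal _ (by linarith)] at h_add
  exact (((h_add.sub h_s).sub h_t).const_mul (1 / 2)).congr (fun ω ↦ by ring) (by ring)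

lemma cov_sub_nonneg (hs : s ∈ S) (ht : t ∈ S) : 0 ≤ c s s - 2 * c s t + c t t := by
  have h_law := HasExpectation.pow_of_hasLaw_gaussianReal (hX.hasLaw_add_const_mul hs ht (-1)) 2
  have h_expand := ((hX.hasExpectation_mul hc hc_symm hs hs).sub
    ((hX.hasExpectation_mul hc hc_symm hs ht).const_mul 2)).add
    (hX.hasExpectation_mul hc hc_symm ht ht)
  have h_eq := h_law.2.symm.trans (h_expand.congr (fun ω ↦ by ring) rfl).2
  rw [integral_sq_gaussianReal] at h_eq
  linarith [NNReal.coe_nonneg (c s s + -1 * c s t + -1 * c t s + (-1) ^ 2 * c t t).toNNReal]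

/-- Isserlis' formula for `E[X_s² X_t²]`, by polarization of the fourth moments. -/
lemma hasExpectation_sq_mul_sq (hs : s ∈ S) (ht : t ∈ S) :
    HasExpectation P (fun ω ↦ X s ω ^ 2 * X t ω ^ 2)
      ((m s ^ 2 + c s s) * (m t ^ 2 + c t t) + (2 * c s t ^ 2 + 4 * m s * m t * c s t)) := by
  have h_s := HasExpectation.pow_of_hasLaw_gaussianReal (hX.hasLaw hs) 4
  have h_t := HasExpectation.pow_of_hasLaw_gaussianReal (hX.hasLaw ht) 4
  have h_add := HasExpectation.pow_of_hasLaw_gaussianReal (hX.hasLaw_add_const_mul hs ht 1) 4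
  have h_sub := HasExpectation.pow_of_hasLaw_gaussianReal (hX.hasLaw_add_const_mul hs ht (-1)) 4
  have hc_ss := hc s hs s hs
  have hc_st := hc s hs t ht
  have hc_tt := hc t ht t ht
  have hc_sub := hX.cov_sub_nonneg hc hc_symm hs ht
  rw [integral_pow_four_gaussianReal, Real.coe_toNNReal _ hc_ss] at h_s
  rw [integral_pow_four_gaussianReal, Real.coe_toNNReal _ hc_tt] at h_t
  rw [integral_pow_four_gaussianReal, ← hc_symm s t, Real.coe_toNNReal _ (by linarith)]
    at h_add h_sub
  exact ((((h_add.add h_sub).sub (h_s.const_mul 2)).sub (h_t.const_mul 2)).const_mul (1 / 12)).congr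
    (fun ω ↦ by ring) (by ring)

lemma hasExpectation_centered_mul [IsProbabilityMeasure P] (hs : s ∈ S) (ht : t ∈ S) :
    HasExpectation P (fun ω ↦ (X s ω - m s) * (X t ω - m t)) (c s t) :=
  (hX.hasExpectation hs).sub_mul_sub (hX.hasExpectation ht) (hX.hasExpectation_mul hc hc_symm hs ht)

lemma hasExpectation_centered_sq_mul_sq [IsProbabilityMeasure P] (hs : s ∈ S) (ht : t ∈ S) :
    HasExpectation P
      (fun ω ↦ (X s ω ^ 2 - (m s ^ 2 + c s s)) * (X t ω ^ 2 - (m t ^ 2 + c t t)))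
      (2 * c s t ^ 2 + 4 * m s * m t * c s t) := by
  have h_sq {r : ℝ} (hr : r ∈ S) : HasExpectation P (fun ω ↦ X r ω ^ 2) (m r ^ 2 + c r r) :=
    (hX.hasExpectation_mul hc hc_symm hr hr).congr (fun ω ↦ (sq _).symm) (by ring)
  exact (h_sq hs).sub_mul_sub (h_sq ht) (hX.hasExpectation_sq_mul_sq hc hc_symm hs ht)

end NonnegCovariance

end IsGaussianProcessOn

end GaussianProcess

section SecondOrder

variable {ι Ω : Type*} [MeasurableSpace ι] [MeasurableSpace Ω] {P : Measure Ω} [SFinite P]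
  {ρ : Measure ι} [IsFiniteMeasure ρ] {Z : ι → Ω → ℝ} {M : ℝ}

lemma memLp_two_uncurry (hZ : AEStronglyMeasurable (Function.uncurry Z) (ρ.prod P))
    (hZ_sq : ∀ᵐ t ∂ρ, Integrable (fun ω ↦ Z t ω ^ 2) P ∧ ∫ ω, Z t ω ^ 2 ∂P ≤ M) :
    MemLp (Function.uncurry Z) 2 (ρ.prod P) := by
  have h_meas : AEStronglyMeasurable (fun z : ι × Ω ↦ Z z.1 z.2 ^ 2) (ρ.prod P) := hZ.pow 2
  refine (memLp_two_iff_integrable_sq hZ).2 ((integrable_prod_iff h_meas).2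
    ⟨hZ_sq.mono fun t ht ↦ ht.1, .mono' (integrable_const M) h_meas.norm.integral_prod_right' ?_⟩)
  filter_upwards [hZ_sq] with t ht
  rw [Real.norm_of_nonneg (integral_nonneg fun _ ↦ norm_nonneg _)]
  simpa only [norm_pow, Real.norm_eq_abs, sq_abs] using ht.2

lemma integrable_mul_uncurry (hZ : AEStronglyMeasurable (Function.uncurry Z) (ρ.prod P))
    (hZ_sq : ∀ᵐ t ∂ρ, Integrable (fun ω ↦ Z t ω ^ 2) P ∧ ∫ ω, Z t ω ^ 2 ∂P ≤ M) :
    Integrable (fun q : (ι × ι) × Ω ↦ Z q.1.1 q.2 * Z q.1.2 q.2) ((ρ.prod ρ).prod P) := by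
  have h_id := Measure.QuasiMeasurePreserving.id P
  have h_fst := Measure.quasiMeasurePreserving_fst (μ := ρ) (ν := ρ)
  have h_snd := Measure.quasiMeasurePreserving_snd (μ := ρ) (ν := ρ)
  have h_left := memLp_two_uncurry (Z := fun q : ι × ι ↦ Z q.1)
    (hZ.comp_quasiMeasurePreserving (QuasiMeasurePreserving.prodMap h_fst h_id)) (h_fst.ae hZ_sq)
  have h_right := memLp_two_uncurry (Z := fun q : ι × ι ↦ Z q.2)
    (hZ.comp_quasiMeasurePreserving (QuasiMeasurePreserving.prodMap h_snd h_id)) (h_snd.ae hZ_sq)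
  exact h_left.integrable_mul h_right

lemma hasExpectation_integral_sq (hZ : AEStronglyMeasurable (Function.uncurry Z) (ρ.prod P))
    (hZ_sq : ∀ᵐ t ∂ρ, Integrable (fun ω ↦ Z t ω ^ 2) P ∧ ∫ ω, Z t ω ^ 2 ∂P ≤ M) :
    HasExpectation P (fun ω ↦ (∫ t, Z t ω ∂ρ) ^ 2)
      (∫ q : ι × ι, ∫ ω, Z q.1 ω * Z q.2 ω ∂P ∂ρ.prod ρ) := by
  have h_int := integrable_mul_uncurry hZ hZ_sq
  have h_sq (ω : Ω) : ∫ q : ι × ι, Z q.1 ω * Z q.2 ω ∂ρ.prod ρ = (∫ t, Z t ω ∂ρ) ^ 2 := by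
    rw [integral_prod_mul (fun t ↦ Z t ω) (fun t ↦ Z t ω), sq]
  simp_rw [HasExpectation, ← h_sq]
  exact ⟨h_int.integral_prod_right, (integral_integral_swap h_int).symm⟩

end SecondOrder

lemma integral_prod_comp_sub_le {k : ℝ → ℝ} (hk : Integrable k) (hk₀ : ∀ x, 0 ≤ k x)
    {ν : Measure ℝ} [IsFiniteMeasure ν] (hν : ν ≤ volume) :
    Integrable (fun q : ℝ × ℝ ↦ k (q.1 - q.2)) (ν.prod ν) ∧
      ∫ q : ℝ × ℝ, k (q.1 - q.2) ∂ν.prod ν ≤ ν.real univ * ∫ x, k x := by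
  have h_int : Integrable (fun q : ℝ × ℝ ↦ k (q.1 - q.2)) ((volume : Measure ℝ).prod ν) := by
    simpa using (integrable_const (μ := ν) (1 : ℝ)).convolution_integrand (.mul ℝ ℝ) hk
  have h_le : ν.prod ν ≤ (volume : Measure ℝ).prod ν := Measure.prod_mono hν le_rfl
  refine ⟨h_int.mono_measure h_le, ?_⟩
  calc ∫ q : ℝ × ℝ, k (q.1 - q.2) ∂ν.prod ν
      ≤ ∫ q : ℝ × ℝ, k (q.1 - q.2) ∂(volume : Measure ℝ).prod ν :=
        integral_mono_measure h_le (.of_forall fun _ ↦ hk₀ _) h_int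
    _ = ν.real univ * ∫ x, k x := by
        rw [integral_prod_symm _ h_int]
        simp only [integral_sub_right_eq_self, integral_const, smul_eq_mul]

/-- The average of a path over `[0, T]`, the empirical moments of the process being the time
averages of `X` and `X²`. -/
def timeAverage (f : ℝ → ℝ) (T : ℝ) : ℝ := (1 / T) * ∫ t in (0 : ℝ)..T, f t

section CovarianceDominated

variable {Ω : Type*} [MeasurableSpace Ω]

/-- `Y` is a jointly measurable process over the times `t > 0` with mean function `a` whose
covariance `cov(Y_s, Y_t)` is at most `k (s - t)` for an integrable `k ≥ 0`, which is the short
memory that makes the time averages of `Y - a` concentrate around `0`. -/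
structure CovarianceDominated (P : Measure Ω) (Y : ℝ → Ω → ℝ) (a k : ℝ → ℝ) : Prop where
  measurable : Measurable (Function.uncurry Y)
  intervalIntegrable_mean : ∀ T > 0, IntervalIntegrable a volume 0 T
  integrable : Integrable k
  nonneg : ∀ x, 0 ≤ k x
  integrable_mul : ∀ s > 0, ∀ t > 0, Integrable (fun ω ↦ (Y s ω - a s) * (Y t ω - a t)) P
  integral_mul_le : ∀ s > 0, ∀ t > 0, ∫ ω, (Y s ω - a s) * (Y t ω - a t) ∂P ≤ k (s - t)

namespace CovarianceDominated

variable {P : Measure Ω} {Y : ℝ → Ω → ℝ} {a k : ℝ → ℝ} {T : ℝ}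

lemma aestronglyMeasurable_centered (hY : CovarianceDominated P Y a k) (hT : 0 < T) :
    AEStronglyMeasurable (Function.uncurry fun t ω ↦ Y t ω - a t)
      ((volume.restrict (Ioc 0 T)).prod P) :=
  hY.measurable.aestronglyMeasurable.sub (hY.intervalIntegrable_mean T hT).1.1.comp_fst

lemma ae_integral_sq_le (hY : CovarianceDominated P Y a k) (T : ℝ) :
    ∀ᵐ t ∂volume.restrict (Ioc 0 T), Integrable (fun ω ↦ (Y t ω - a t) ^ 2) P ∧
      ∫ ω, (Y t ω - a t) ^ 2 ∂P ≤ k 0 := by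
  refine (ae_restrict_iff' measurableSet_Ioc).2 (.of_forall fun t ht ↦ ?_)
  simpa only [← sq, sub_self] using
    And.intro (hY.integrable_mul t ht.1 t ht.1) (hY.integral_mul_le t ht.1 t ht.1)

variable [IsFiniteMeasure P]

lemma ae_intervalIntegrable (hY : CovarianceDominated P Y a k) :
    ∀ᵐ ω ∂P, ∀ T > 0, IntervalIntegrable (fun t ↦ Y t ω) volume 0 T := by
  have h_nat (n : ℕ) : ∀ᵐ ω ∂P, IntervalIntegrable (fun t ↦ Y t ω) volume 0 (n + 1) := by
    have hn : (0 : ℝ) < n + 1 := n.cast_add_one_pos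
    have h_int := (memLp_two_uncurry (hY.aestronglyMeasurable_centered hn)
      (hY.ae_integral_sq_le _)).integrable one_le_two
    filter_upwards [h_int.prod_left_ae] with ω hω
    simpa using ((intervalIntegrable_iff_integrableOn_Ioc_of_le hn.le).2 hω).add
      (hY.intervalIntegrable_mean _ hn)
  filter_upwards [ae_all_iff.2 h_nat] with ω hω T hT
  obtain ⟨n, hn⟩ := exists_nat_ge T
  exact (hω n).mono_set (by
    rw [uIcc_of_le hT.le, uIcc_of_le n.cast_add_one_pos.le]
    exact Icc_subset_Icc_right (hn.trans (lt_add_one _).le))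

lemma integral_sq_intervalIntegral_le (hY : CovarianceDominated P Y a k) (hT : 0 < T) :
    Integrable (fun ω ↦ (∫ t in (0 : ℝ)..T, (Y t ω - a t)) ^ 2) P ∧
      ∫ ω, (∫ t in (0 : ℝ)..T, (Y t ω - a t)) ^ 2 ∂P ≤ T * ∫ x, k x := by
  set ν := volume.restrict (Ioc 0 T)
  have h_meas := hY.aestronglyMeasurable_centered hT
  have h_sq := hY.ae_integral_sq_le T
  have h_exp := hasExpectation_integral_sq h_meas h_sq
  have h_pos : ∀ᵐ t ∂ν, 0 < t :=
    (ae_restrict_iff' measurableSet_Ioc).2 (.of_forall fun t ht ↦ ht.1)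
  obtain ⟨hk_int, hk_le⟩ := integral_prod_comp_sub_le hY.integrable hY.nonneg
    (Measure.restrict_le_self : ν ≤ volume)
  simp_rw [intervalIntegral.integral_of_le hT.le]
  refine ⟨h_exp.1, h_exp.2.trans_le ?_⟩
  calc ∫ q : ℝ × ℝ, ∫ ω, (Y q.1 ω - a q.1) * (Y q.2 ω - a q.2) ∂P ∂ν.prod ν
      ≤ ∫ q : ℝ × ℝ, k (q.1 - q.2) ∂ν.prod ν := by
        refine integral_mono_ae (integrable_mul_uncurry h_meas h_sq).integral_prod_left hk_int ?_
        filter_upwards [Measure.quasiMeasurePreserving_fst.ae h_pos,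
          Measure.quasiMeasurePreserving_snd.ae h_pos] with q h_fst h_snd
        exact hY.integral_mul_le _ h_fst _ h_snd
    _ ≤ T * ∫ x, k x := by simpa [ν, hT.le] using hk_le

lemma integral_sq_timeAverage_sub_le (hY : CovarianceDominated P Y a k) (hT : 0 < T) :
    Integrable (fun ω ↦ (timeAverage (Y · ω) T - timeAverage a T) ^ 2) P ∧
      ∫ ω, (timeAverage (Y · ω) T - timeAverage a T) ^ 2 ∂P ≤ (∫ x, k x) / T := by
  obtain ⟨h_int, h_le⟩ := hY.integral_sq_intervalIntegral_le hT
  have h_eq : (fun ω ↦ (1 / T) ^ 2 * (∫ t in (0 : ℝ)..T, (Y t ω - a t)) ^ 2) =ᵐ[P]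
      fun ω ↦ (timeAverage (Y · ω) T - timeAverage a T) ^ 2 := by
    filter_upwards [hY.ae_intervalIntegrable] with ω hω
    rw [timeAverage, timeAverage, ← mul_sub, mul_pow,
      intervalIntegral.integral_sub (hω T hT) (hY.intervalIntegrable_mean T hT)]
  refine ⟨(h_int.const_mul _).congr h_eq, ?_⟩
  calc ∫ ω, (timeAverage (Y · ω) T - timeAverage a T) ^ 2 ∂P
      = (1 / T) ^ 2 * ∫ ω, (∫ t in (0 : ℝ)..T, (Y t ω - a t)) ^ 2 ∂P := by
        rw [← integral_congr_ae h_eq, integral_const_mul]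
    _ ≤ (1 / T) ^ 2 * (T * ∫ x, k x) := by gcongr
    _ = (∫ x, k x) / T := by field

end CovarianceDominated

end CovarianceDominated

section VOUMoments

variable {Ω : Type*} [MeasurableSpace Ω] {P : Measure Ω} [IsProbabilityMeasure P]

namespace IsGaussianProcessOn

variable {X : ℝ → Ω → ℝ} {m k : ℝ → ℝ} {c : ℝ → ℝ → ℝ}
  (hX : IsGaussianProcessOn P (Ici 0) X m c) (hX_meas : Measurable (Function.uncurry X))
  (hm : ContinuousOn m (Ici 0)) (hc : ∀ s ∈ Ici 0, ∀ t ∈ Ici 0, 0 ≤ c s t)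
  (hc_symm : ∀ s t, c s t = c t s) (hk : Integrable k) (hk₀ : ∀ x, 0 ≤ k x)
  (hck : ∀ s ∈ Ici 0, ∀ t ∈ Ici 0, c s t ≤ k (s - t))

include hX hX_meas hm hc hc_symm hk hk₀ hck

lemma covarianceDominated : CovarianceDominated P X m k where
  measurable := hX_meas
  intervalIntegrable_mean _ hT :=
    (hm.mono (uIcc_of_le hT.le ▸ Icc_subset_Ici_self)).intervalIntegrable
  integrable := hk
  nonneg := hk₀
  integrable_mul _ hs _ ht := (hX.hasExpectation_centered_mul hc hc_symm hs.le ht.le).1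
  integral_mul_le s hs t ht :=
    (hX.hasExpectation_centered_mul hc hc_symm hs.le ht.le).2.trans_le (hck s hs.le t ht.le)

lemma covarianceDominated_sq {B V : ℝ} (hm_le : ∀ t > 0, |m t| ≤ B) (hk_le : ∀ x, k x ≤ V)
    (hc_cont : ContinuousOn (fun t ↦ c t t) (Ici 0)) :
    CovarianceDominated P (fun t ω ↦ X t ω ^ 2) (fun t ↦ m t ^ 2 + c t t)
      (fun x ↦ (2 * V + 4 * B ^ 2) * k x) where
  measurable := hX_meas.pow_const 2
  intervalIntegrable_mean _ hT := (((hm.pow 2).add hc_cont).mono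
    (uIcc_of_le hT.le ▸ Icc_subset_Ici_self)).intervalIntegrable
  integrable := hk.const_mul _
  nonneg x := by
    have hV : 0 ≤ V := (hk₀ 0).trans (hk_le 0)
    exact mul_nonneg (by positivity) (hk₀ x)
  integrable_mul _ hs _ ht := (hX.hasExpectation_centered_sq_mul_sq hc hc_symm hs.le ht.le).1
  integral_mul_le s hs t ht := by
    have hB : 0 ≤ B := (abs_nonneg _).trans (hm_le s hs)
    have h_mean : m s * m t ≤ B ^ 2 := (le_abs_self _).trans (by
      rw [abs_mul, sq]
      exact mul_le_mul (hm_le s hs) (hm_le t ht) (abs_nonneg _) hB)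
    have h_nonneg := hc s hs.le t ht.le
    have h_le := hck s hs.le t ht.le
    calc ∫ ω, (X s ω ^ 2 - (m s ^ 2 + c s s)) * (X t ω ^ 2 - (m t ^ 2 + c t t)) ∂P
        = (2 * c s t + 4 * (m s * m t)) * c s t := by
          rw [(hX.hasExpectation_centered_sq_mul_sq hc hc_symm hs.le ht.le).2]
          ring
      _ ≤ (2 * V + 4 * B ^ 2) * c s t := by
          gcongr
          exact h_le.trans (hk_le _)
      _ ≤ (2 * V + 4 * B ^ 2) * k (s - t) := by
          have hV : 0 ≤ V := (hk₀ 0).trans (hk_le 0)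
          gcongr

end IsGaussianProcessOn

lemma continuousOn_Ici_intervalIntegral {f : ℝ → ℝ} {a : ℝ} (hf : IntegrableOn f (Ioi a)) :
    ContinuousOn (fun t ↦ ∫ s in a..t, f s) (Ici a) := by
  refine ((continuousOn_const (c := ∫ s in Ioi a, f s)).sub
    hf.continuousOn_Ici_primitive_Ioi).congr fun t ht ↦ ?_
  exact eq_sub_of_add_eq (intervalIntegral.integral_interval_add_Ioi hf
    (hf.mono_set (Ioi_subset_Ioi ht)))

namespace SolvesResolventEq

variable {K : ℝ → ℝ} {E : ℝ → ℝ → ℝ} {β : ℝ}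

lemma continuousOn_meanVOU (hE : SolvesResolventEq K β (E β)) (hK : IsVolterraKernel K)
    (hβ : β < 0) (x₀ b : ℝ) : ContinuousOn (meanVOU E x₀ b β) (Ici 0) := by
  have h_prim := continuousOn_Ici_intervalIntegral (hE.integrableOn hK hβ)
  unfold meanVOU
  fun_prop

lemma continuousOn_covVOU_self (hE : SolvesResolventEq K β (E β)) (hK : IsVolterraKernel K)
    (hβ : β < 0) (σ : ℝ) : ContinuousOn (fun t ↦ covVOU E σ β t t) (Ici 0) := by
  simp_rw [covVOU_self]
  exact continuousOn_const.mul (continuousOn_Ici_intervalIntegral (hE.integrableOn_sq hK hβ))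

variable {x₀ b σ : ℝ} {X : ℝ → Ω → ℝ}

lemma covVOU_le_covStatVOU_zero_sub (hE : SolvesResolventEq K β (E β)) (hK : IsVolterraKernel K)
    (hβ : β < 0) (σ : ℝ) {s t : ℝ} (hs : 0 ≤ s) (ht : 0 ≤ t) :
    covVOU E σ β s t ≤ covStatVOU E σ β 0 (s - t) := by
  rw [covVOU_comm, ← covStatVOU_eq_zero_sub]
  exact hE.covVOU_le_covStatVOU hK hβ σ ht hs

lemma covarianceDominated_vou (hE : SolvesResolventEq K β (E β)) (hK : IsVolterraKernel K)
    (hβ : β < 0) (hX_meas : Measurable (Function.uncurry X))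
    (hX : IsGaussianProcessOn P (Ici 0) X (meanVOU E x₀ b β) (covVOU E σ β)) :
    CovarianceDominated P X (meanVOU E x₀ b β) (covStatVOU E σ β 0) :=
  hX.covarianceDominated hX_meas (hE.continuousOn_meanVOU hK hβ x₀ b)
    (fun _ hs _ ht ↦ hE.covVOU_nonneg hK hβ σ hs ht) (covVOU_comm E σ β)
    (hE.integrable_covStatVOU hK hβ σ) (hE.covStatVOU_nonneg hK hβ σ 0)
    (fun _ hs _ ht ↦ hE.covVOU_le_covStatVOU_zero_sub hK hβ σ hs ht)

lemma covarianceDominated_vou_sq (hE : SolvesResolventEq K β (E β)) (hK : IsVolterraKernel K)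
    (hβ : β < 0) (hX_meas : Measurable (Function.uncurry X))
    (hX : IsGaussianProcessOn P (Ici 0) X (meanVOU E x₀ b β) (covVOU E σ β)) :
    CovarianceDominated P (fun t ω ↦ X t ω ^ 2)
      (fun t ↦ meanVOU E x₀ b β t ^ 2 + covVOU E σ β t t)
      (fun x ↦ (2 * mvarVOU E σ β + 4 * (|b / -β| + |x₀ - b / -β|) ^ 2) *
        covStatVOU E σ β 0 x) :=
  hX.covarianceDominated_sq hX_meas (hE.continuousOn_meanVOU hK hβ x₀ b)
    (fun _ hs _ ht ↦ hE.covVOU_nonneg hK hβ σ hs ht) (covVOU_comm E σ β)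
    (hE.integrable_covStatVOU hK hβ σ) (hE.covStatVOU_nonneg hK hβ σ 0)
    (fun _ hs _ ht ↦ hE.covVOU_le_covStatVOU_zero_sub hK hβ σ hs ht)
    (fun _ ht ↦ hE.abs_meanVOU_le hK hβ x₀ b ht) (hE.covStatVOU_le_mvarVOU hK hβ σ 0)
    (hE.continuousOn_covVOU_self hK hβ σ)

end SolvesResolventEq

end VOUMoments

section TimeAverage

variable {f : ℝ → ℝ} {L : ℝ}

lemma tendsto_timeAverage {ι : Type*} {l : Filter ι} [l.IsCountablyGenerated] {f : ι → ℝ → ℝ}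
    {g : ι → ℝ} (hf_int : ∀ᶠ i in l, ∀ T > 0, IntervalIntegrable (f i) volume 0 T)
    (hf_le : ∀ᶠ i in l, ∀ t > 0, |f i t| ≤ g i) (hg : IsBoundedUnder (· ≤ ·) l g)
    (hf : Tendsto (fun p : ℝ × ι ↦ f p.2 p.1) (atTop ×ˢ l) (𝓝 L)) :
    Tendsto (fun p : ℝ × ι ↦ timeAverage (f p.2) p.1) (atTop ×ˢ l) (𝓝 L) := by
  obtain ⟨B, hB⟩ := hg
  have h_pos : ∀ᶠ p : ℝ × ι in atTop ×ˢ l, 0 < p.1 := tendsto_fst.eventually_gt_atTop 0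
  have h_lim : Tendsto (fun p : ℝ × ι ↦ ∫ u in (0 : ℝ)..1, f p.2 (p.1 * u)) (atTop ×ˢ l)
      (𝓝 (∫ _ in (0 : ℝ)..1, L)) := by
    refine intervalIntegral.tendsto_integral_filter_of_dominated_convergence (fun _ ↦ B) ?_ ?_
      intervalIntegrable_const ?_
    · filter_upwards [h_pos, tendsto_snd.eventually hf_int] with p hp h_int
      have h_scaled := (h_int p.1 hp).comp_mul_left (c := p.1)
      rw [zero_div, div_self hp.ne'] at h_scaled
      exact h_scaled.def'.aestronglyMeasurable
    · filter_upwards [h_pos, tendsto_snd.eventually hf_le, tendsto_snd.eventually hB]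
        with p hp h_le hpB
      refine .of_forall fun u hu ↦ (h_le _ ?_).trans hpB
      exact mul_pos hp (uIoc_of_le (zero_le_one' ℝ) ▸ hu).1
    · refine .of_forall fun u hu ↦ ?_
      have h_fst : Tendsto (fun p : ℝ × ι ↦ p.1 * u) (atTop ×ˢ l) atTop :=
        tendsto_fst.atTop_mul_const (uIoc_of_le (zero_le_one' ℝ) ▸ hu).1
      exact hf.comp (h_fst.prodMk tendsto_snd)
  rw [intervalIntegral.integral_const, sub_zero, one_smul] at h_lim
  refine h_lim.congr' (h_pos.mono fun p hp ↦ ?_)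
  rw [intervalIntegral.integral_comp_mul_left _ hp.ne', mul_zero, mul_one, smul_eq_mul,
    ← one_div]
  rfl

lemma timeAverage_add_one_sq {T : ℝ} (hT : 0 < T) (hf : IntervalIntegrable f volume 0 T)
    (hf_sq : IntervalIntegrable (fun t ↦ f t ^ 2) volume 0 T) :
    timeAverage (fun t ↦ (f t + 1) ^ 2) T =
      timeAverage (fun t ↦ f t ^ 2) T + 2 * timeAverage f T + 1 := by
  simp only [timeAverage, add_sq, mul_one, one_pow]
  rw [intervalIntegral.integral_add (hf_sq.add (hf.const_mul 2)) intervalIntegrable_const,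
    intervalIntegral.integral_add hf_sq (hf.const_mul 2), intervalIntegral.integral_const_mul,
    intervalIntegral.integral_const]
  simp only [sub_zero, smul_eq_mul, mul_one]
  field

lemma div_mul_timeAverage_le (hf₀ : ∀ t, 0 ≤ f t) {S T : ℝ} (hST : S ≤ T) (hS : 0 < S)
    (hf : IntervalIntegrable f volume 0 T) : S / T * timeAverage f S ≤ timeAverage f T := by
  have h_mono : ∫ t in (0 : ℝ)..S, f t ≤ ∫ t in (0 : ℝ)..T, f t :=
    intervalIntegral.integral_mono_interval le_rfl hS.le hST (.of_forall hf₀) hf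
  calc S / T * timeAverage f S = 1 / T * ∫ t in (0 : ℝ)..S, f t := by
        rw [timeAverage]
        field
    _ ≤ timeAverage f T := by
        have hT : 0 < T := hS.trans_le hST
        rw [timeAverage]
        gcongr

/- `T` lies between the consecutive squares `⌊√T⌋²` and `⌈√T⌉²`, whose ratio tends to `1`. -/
lemma tendsto_timeAverage_of_nat_sq_of_nonneg (hf₀ : ∀ t, 0 ≤ f t)
    (hf : ∀ T > 0, IntervalIntegrable f volume 0 T)
    (h : Tendsto (fun n : ℕ ↦ timeAverage f (n ^ 2)) atTop (𝓝 L)) :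
    Tendsto (timeAverage f) atTop (𝓝 L) := by
  have h_floor := ((tendsto_nat_floor_div_atTop.comp Real.tendsto_sqrt_atTop).pow 2).mul
    (h.comp (tendsto_nat_floor_atTop.comp Real.tendsto_sqrt_atTop))
  have h_ceil := ((tendsto_nat_ceil_div_atTop.comp Real.tendsto_sqrt_atTop).pow 2).mul
    (h.comp (tendsto_nat_ceil_atTop.comp Real.tendsto_sqrt_atTop))
  rw [one_pow, one_mul] at h_floor h_ceil
  refine tendsto_of_tendsto_of_tendsto_of_le_of_le' h_floor h_ceil ?_ ?_
  all_goals
    filter_upwards [eventually_ge_atTop 1] with T hT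
    have hT₀ : 0 < T := one_pos.trans_le hT
    have h_sqrt : √T ^ 2 = T := Real.sq_sqrt hT₀.le
    simp only [Function.comp_apply, div_pow, h_sqrt]
  · have h_pos : 0 < ⌊√T⌋₊ := Nat.floor_pos.2 (Real.one_le_sqrt.2 hT)
    refine div_mul_timeAverage_le hf₀ ?_ (by positivity) (hf T hT₀)
    calc (⌊√T⌋₊ : ℝ) ^ 2 ≤ √T ^ 2 := by gcongr; exact Nat.floor_le (Real.sqrt_nonneg T)
      _ = T := h_sqrt
  · have h_le : T ≤ (⌈√T⌉₊ : ℝ) ^ 2 := calc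
      T = √T ^ 2 := h_sqrt.symm
      _ ≤ (⌈√T⌉₊ : ℝ) ^ 2 := by gcongr; exact Nat.le_ceil _
    have h_pos := hT₀.trans_le h_le
    have h_div := div_mul_timeAverage_le hf₀ h_le hT₀ (hf _ h_pos)
    calc timeAverage f T
        = (⌈√T⌉₊ : ℝ) ^ 2 / T * (T / (⌈√T⌉₊ : ℝ) ^ 2 * timeAverage f T) := by field
      _ ≤ (⌈√T⌉₊ : ℝ) ^ 2 / T * timeAverage f ((⌈√T⌉₊ : ℝ) ^ 2) := by gcongr

/- Apply the nonnegative case to `f²` and to `(f + 1)² = f² + 2f + 1`. -/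
lemma tendsto_timeAverage_of_nat_sq {L₂ : ℝ} (hf : ∀ T > 0, IntervalIntegrable f volume 0 T)
    (hf_sq : ∀ T > 0, IntervalIntegrable (fun t ↦ f t ^ 2) volume 0 T)
    (h : Tendsto (fun n : ℕ ↦ timeAverage f (n ^ 2)) atTop (𝓝 L))
    (h_sq : Tendsto (fun n : ℕ ↦ timeAverage (fun t ↦ f t ^ 2) (n ^ 2)) atTop (𝓝 L₂)) :
    Tendsto (fun T ↦ (timeAverage f T, timeAverage (fun t ↦ f t ^ 2) T)) atTop (𝓝 (L, L₂)) := by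
  have h_lim_sq := tendsto_timeAverage_of_nat_sq_of_nonneg (fun t ↦ sq_nonneg (f t)) hf_sq h_sq
  have h_eq {T : ℝ} (hT : 0 < T) := timeAverage_add_one_sq hT (hf T hT) (hf_sq T hT)
  have h_lim_shift : Tendsto (timeAverage fun t ↦ (f t + 1) ^ 2) atTop (𝓝 (L₂ + 2 * L + 1)) := by
    refine tendsto_timeAverage_of_nat_sq_of_nonneg (fun t ↦ sq_nonneg _) (fun T hT ↦ ?_) ?_
    · simp only [add_sq, mul_one, one_pow]
      exact ((hf_sq T hT).add ((hf T hT).const_mul 2)).add intervalIntegrable_const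
    · refine ((h_sq.add (h.const_mul 2)).add_const 1).congr' ?_
      filter_upwards [eventually_gt_atTop 0] with n hn
      exact (h_eq (by positivity)).symm
  have h_lim := ((h_lim_shift.sub h_lim_sq).sub_const 1).div_const 2
  rw [show (L₂ + 2 * L + 1 - L₂ - 1) / 2 = L by ring] at h_lim
  refine .prodMk_nhds (h_lim.congr' ?_) h_lim_sq
  filter_upwards [eventually_gt_atTop 0] with T hT
  rw [h_eq hT]
  ring

end TimeAverage

section Convergence

variable {ι Ω E F : Type*} [MeasurableSpace Ω] {P : Measure Ω} {l : Filter ι}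

lemma tendstoInMeasure_const_iff [PseudoEMetricSpace E] {f : ι → Ω → E} {c : E} :
    TendstoInMeasure P f l (fun _ ↦ c) ↔
      ∀ U ∈ 𝓝 c, Tendsto (fun i ↦ P {ω | f i ω ∉ U}) l (𝓝 0) := by
  refine ⟨fun h U hU ↦ ?_, fun h ε hε ↦ ?_⟩
  · obtain ⟨ε, hε, h_ball⟩ := EMetric.mem_nhds_iff.1 hU
    have h_sub (i : ι) : {ω | f i ω ∉ U} ⊆ {ω | ε ≤ edist (f i ω) c} := fun ω hω ↦
      show ε ≤ edist (f i ω) c from not_lt.1 fun h_lt ↦ hω (h_ball h_lt)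
    exact tendsto_of_tendsto_of_tendsto_of_le_of_le tendsto_const_nhds (h ε hε)
      (fun _ ↦ zero_le) fun i ↦ measure_mono (h_sub i)
  · simpa only [Metric.mem_eball, not_lt] using h _ (Metric.eball_mem_nhds c hε)

lemma tendstoInMeasure_const_of_tendsto [PseudoEMetricSpace E] {u : ι → E} {c : E}
    (hu : Tendsto u l (𝓝 c)) : TendstoInMeasure P (fun i _ ↦ u i) l (fun _ ↦ c) := by
  refine tendstoInMeasure_const_iff.2 fun U hU ↦ tendsto_const_nhds.congr' ?_
  filter_upwards [hu hU] with i hi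
  simp [show u i ∈ U from hi]

lemma tendstoInMeasure_const_prodMk [PseudoEMetricSpace E] [PseudoEMetricSpace F]
    {f : ι → Ω → E} {g : ι → Ω → F} {c : E} {d : F}
    (hf : TendstoInMeasure P f l (fun _ ↦ c)) (hg : TendstoInMeasure P g l (fun _ ↦ d)) :
    TendstoInMeasure P (fun i ω ↦ (f i ω, g i ω)) l (fun _ ↦ (c, d)) := by
  refine tendstoInMeasure_const_iff.2 fun W hW ↦ ?_
  obtain ⟨U, hU, V, hV, h_sub⟩ := mem_nhds_prod_iff.1 hW
  have h_sum := (tendstoInMeasure_const_iff.1 hf U hU).add (tendstoInMeasure_const_iff.1 hg V hV)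
  rw [add_zero] at h_sum
  refine tendsto_of_tendsto_of_tendsto_of_le_of_le tendsto_const_nhds h_sum (fun _ ↦ zero_le)
    fun i ↦ (measure_mono fun ω hω ↦ ?_).trans (measure_union_le _ _)
  exact not_and_or.1 fun h_mem ↦ hω (h_sub h_mem)

lemma tendstoInMeasure_const_comp [PseudoEMetricSpace E] [PseudoEMetricSpace F] {f : ι → Ω → E}
    {c : E} {φ : E → F} (hf : TendstoInMeasure P f l (fun _ ↦ c)) (hφ : ContinuousAt φ c) :
    TendstoInMeasure P (fun i ω ↦ φ (f i ω)) l (fun _ ↦ φ c) :=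
  tendstoInMeasure_const_iff.2 fun _ hU ↦ tendstoInMeasure_const_iff.1 hf _ (hφ hU)

lemma tendstoInMeasure_zero_of_integral_sq_le [IsFiniteMeasure P] {f : ι → Ω → ℝ} {c : ι → ℝ}
    (hf : ∀ᶠ i in l, Integrable (fun ω ↦ f i ω ^ 2) P ∧ ∫ ω, f i ω ^ 2 ∂P ≤ c i)
    (hc : Tendsto c l (𝓝 0)) : TendstoInMeasure P f l (fun _ ↦ 0) := by
  refine tendstoInMeasure_iff_measureReal_norm.2 fun ε hε ↦ ?_
  refine squeeze_zero' (.of_forall fun _ ↦ measureReal_nonneg) (hf.mono fun i hi ↦ ?_)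
    (zero_div (ε ^ 2) ▸ hc.div_const (ε ^ 2))
  have h_markov := mul_meas_ge_le_integral_of_nonneg (.of_forall fun ω ↦ sq_nonneg (f i ω)) hi.1
    (ε ^ 2)
  have h_set : {ω | ε ≤ ‖f i ω - 0‖} = {ω | ε ^ 2 ≤ f i ω ^ 2} := by
    ext ω
    rw [mem_ofPred_eq, mem_ofPred_eq, sub_zero, Real.norm_eq_abs, sq_le_sq, abs_of_pos hε]
  rw [h_set, le_div_iff₀ (by positivity), mul_comm]
  exact h_markov.trans hi.2

lemma ae_tendsto_zero_of_summable_integral_sq {f : ℕ → Ω → ℝ} {c : ℕ → ℝ}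
    (hf : ∀ n, Integrable (fun ω ↦ f n ω ^ 2) P ∧ ∫ ω, f n ω ^ 2 ∂P ≤ c n) (hc : Summable c) :
    ∀ᵐ ω ∂P, Tendsto (fun n ↦ f n ω) atTop (𝓝 0) := by
  have h_meas (n : ℕ) : AEMeasurable (fun ω ↦ ENNReal.ofReal (f n ω ^ 2)) P :=
    (hf n).1.aemeasurable.ennreal_ofReal
  have h_finite : ∫⁻ ω, ∑' n, ENNReal.ofReal (f n ω ^ 2) ∂P ≠ ∞ := by
    rw [lintegral_tsum h_meas]
    refine ne_top_of_le_ne_top hc.tsum_ofReal_ne_top (ENNReal.tsum_le_tsum fun n ↦ ?_)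
    rw [← ofReal_integral_eq_lintegral_ofReal (hf n).1 (.of_forall fun ω ↦ sq_nonneg _)]
    exact ENNReal.ofReal_le_ofReal (hf n).2
  filter_upwards [ae_lt_top' (.tsum h_meas) h_finite] with ω hω
  have h_sq := ENNReal.tendsto_atTop_zero_of_tsum_ne_top hω.ne
  rw [← ENNReal.tendsto_toReal_zero_iff fun _ ↦ ENNReal.ofReal_ne_top] at h_sq
  simp_rw [ENNReal.toReal_ofReal (sq_nonneg _)] at h_sq
  refine (tendsto_zero_iff_abs_tendsto_zero _).2 ?_
  simpa only [Real.sqrt_sq_eq_abs, Real.sqrt_zero, Function.comp_def] using h_sq.sqrt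

end Convergence

namespace CovarianceDominated

variable {Ω : Type*} [MeasurableSpace Ω] {P : Measure Ω} [IsFiniteMeasure P]

lemma tendstoInMeasure_timeAverage {ι : Type*} {l : Filter ι} {Y : ι → ℝ → Ω → ℝ}
    {a k : ι → ℝ → ℝ} {L : ℝ} (hY : ∀ᶠ i in l, CovarianceDominated P (Y i) (a i) (k i))
    (hk : IsBoundedUnder (· ≤ ·) l fun i ↦ ∫ x, k i x)
    (ha : Tendsto (fun p : ℝ × ι ↦ timeAverage (a p.2) p.1) (atTop ×ˢ l) (𝓝 L)) :
    TendstoInMeasure P (fun (p : ℝ × ι) ω ↦ timeAverage (Y p.2 · ω) p.1) (atTop ×ˢ l)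
      (fun _ ↦ L) := by
  obtain ⟨C, hC⟩ := hk
  have h_centered : TendstoInMeasure P
      (fun (p : ℝ × ι) ω ↦ timeAverage (Y p.2 · ω) p.1 - timeAverage (a p.2) p.1) (atTop ×ˢ l)
      (fun _ ↦ 0) := by
    refine tendstoInMeasure_zero_of_integral_sq_le (c := fun p ↦ C / p.1) ?_
      (tendsto_fst.const_div_atTop C)
    filter_upwards [tendsto_fst.eventually_gt_atTop 0, tendsto_snd.eventually hY,
      tendsto_snd.eventually hC] with p hT hYp hCp
    obtain ⟨h_int, h_le⟩ := hYp.integral_sq_timeAverage_sub_le hT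
    exact ⟨h_int, h_le.trans (by gcongr)⟩
  have h_pair := tendstoInMeasure_const_prodMk h_centered
    (tendstoInMeasure_const_of_tendsto (P := P) ha)
  simpa only [sub_add_cancel, zero_add] using
    tendstoInMeasure_const_comp h_pair (continuous_add (M := ℝ)).continuousAt

lemma ae_tendsto_timeAverage_nat_sq {Y : ℝ → Ω → ℝ} {a k : ℝ → ℝ} {L : ℝ}
    (hY : CovarianceDominated P Y a k) (ha : Tendsto (timeAverage a) atTop (𝓝 L)) :
    ∀ᵐ ω ∂P, Tendsto (fun n : ℕ ↦ timeAverage (Y · ω) (n ^ 2)) atTop (𝓝 L) := by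
  have h_sum : Summable fun n : ℕ ↦ (∫ x, k x) / ((n + 1 : ℕ) : ℝ) ^ 2 := by
    simpa only [mul_one_div] using ((summable_nat_add_iff 1).2
      (Real.summable_one_div_nat_pow.2 one_lt_two)).mul_left (∫ x, k x)
  have h_ae := ae_tendsto_zero_of_summable_integral_sq
    (fun n : ℕ ↦ hY.integral_sq_timeAverage_sub_le (T := ((n + 1 : ℕ) : ℝ) ^ 2) (by positivity))
    h_sum
  have h_sq : Tendsto (fun n : ℕ ↦ (n : ℝ) ^ 2) atTop atTop :=
    (tendsto_pow_atTop two_ne_zero).comp tendsto_natCast_atTop_atTop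
  filter_upwards [h_ae] with ω hω
  refine (tendsto_add_atTop_iff_nat 1).1 ?_
  simpa only [zero_add, sub_add_cancel, Function.comp_apply] using
    hω.add ((ha.comp h_sq).comp (tendsto_add_atTop_nat 1))

end CovarianceDominated

/-- The empirical first and second moments `(m₁(T), m₂(T))` of a path observed over `[0, T]`. -/
def empiricalMoments (f : ℝ → ℝ) (T : ℝ) : ℝ × ℝ :=
  (timeAverage f T, timeAverage (fun t ↦ f t ^ 2) T)

/-- The stationary first and second moments `(m₁, m₂)` of the VOU process with parameters
`θ = (b, β)`, `β < 0`. -/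
def stationaryMoments (E : ℝ → ℝ → ℝ) (σ : ℝ) (θ : ℝ × ℝ) : ℝ × ℝ :=
  (θ.1 / -θ.2, (θ.1 / -θ.2) ^ 2 + mvarVOU E σ θ.2)

section EmpiricalMoments

variable {K : ℝ → ℝ} {E : ℝ → ℝ → ℝ} {x₀ σ : ℝ} {θ : ℝ × ℝ}

lemma tendsto_bound_meanVOU (x₀ : ℝ) (hθ : θ.2 < 0) :
    Tendsto (fun θ' : ℝ × ℝ ↦ |θ'.1 / -θ'.2| + |x₀ - θ'.1 / -θ'.2|) (𝓝 θ)
      (𝓝 (|θ.1 / -θ.2| + |x₀ - θ.1 / -θ.2|)) :=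
  (tendsto_div_neg hθ).abs.add ((tendsto_div_neg hθ).const_sub x₀).abs

lemma tendsto_timeAverage_meanVOU (hE : ∀ β < 0, SolvesResolventEq K β (E β))
    (hK : IsVolterraKernel K) (x₀ : ℝ) (hθ : θ.2 < 0) :
    Tendsto (fun p : ℝ × ℝ × ℝ ↦ timeAverage (meanVOU E x₀ p.2.1 p.2.2) p.1) (atTop ×ˢ 𝓝 θ)
      (𝓝 (θ.1 / -θ.2)) := by
  have h_lim := tendsto_meanVOU hE hK x₀ hθ
  have h_bdd := (tendsto_bound_meanVOU x₀ hθ).isBoundedUnder_le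
  refine tendsto_timeAverage (l := 𝓝 θ) (f := fun θ' ↦ meanVOU E x₀ θ'.1 θ'.2) ?_ ?_ h_bdd h_lim
  · filter_upwards [eventually_snd_neg hθ] with θ' hθ' T hT
    exact (((hE _ hθ').continuousOn_meanVOU hK hθ' x₀ _).mono
      (uIcc_of_le hT.le ▸ Icc_subset_Ici_self)).intervalIntegrable
  · filter_upwards [eventually_snd_neg hθ] with θ' hθ' t ht
    exact (hE _ hθ').abs_meanVOU_le hK hθ' x₀ _ ht

lemma tendsto_timeAverage_meanVOU_sq_add_covVOU (hE : ∀ β < 0, SolvesResolventEq K β (E β))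
    (hK : IsVolterraKernel K) (x₀ : ℝ) (hθ : θ.2 < 0)
    (h_mvar : Tendsto (fun θ' : ℝ × ℝ ↦ mvarVOU E σ θ'.2) (𝓝 θ) (𝓝 (mvarVOU E σ θ.2))) :
    Tendsto (fun p : ℝ × ℝ × ℝ ↦
        timeAverage (fun t ↦ meanVOU E x₀ p.2.1 p.2.2 t ^ 2 + covVOU E σ p.2.2 t t) p.1)
      (atTop ×ˢ 𝓝 θ) (𝓝 ((θ.1 / -θ.2) ^ 2 + mvarVOU E σ θ.2)) := by
  have h_lim := ((tendsto_meanVOU hE hK x₀ hθ).pow 2).add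
    (tendsto_covVOU_self hE hK σ hθ h_mvar)
  have h_bdd := (((tendsto_bound_meanVOU x₀ hθ).pow 2).add h_mvar).isBoundedUnder_le
  refine tendsto_timeAverage (l := 𝓝 θ)
    (f := fun θ' t ↦ meanVOU E x₀ θ'.1 θ'.2 t ^ 2 + covVOU E σ θ'.2 t t) ?_ ?_ h_bdd h_lim
  · filter_upwards [eventually_snd_neg hθ] with θ' hθ' T hT
    exact ((((hE _ hθ').continuousOn_meanVOU hK hθ' x₀ _).pow 2).add
      ((hE _ hθ').continuousOn_covVOU_self hK hθ' σ)).mono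
      (uIcc_of_le hT.le ▸ Icc_subset_Ici_self) |>.intervalIntegrable
  · filter_upwards [eventually_snd_neg hθ] with θ' hθ' t ht
    have h_cov := (hE _ hθ').covVOU_nonneg hK hθ' σ ht.le ht.le
    rw [abs_of_nonneg (by positivity), ← sq_abs]
    gcongr
    · exact (hE _ hθ').abs_meanVOU_le hK hθ' x₀ _ ht
    · exact (hE _ hθ').covVOU_self_le hK hθ' σ ht.le

variable {Ω : Type*} [MeasurableSpace Ω] {P : Measure Ω} [IsProbabilityMeasure P]

lemma tendstoInMeasure_empiricalMoments (hE : ∀ β < 0, SolvesResolventEq K β (E β))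
    (hK : IsVolterraKernel K) {X : ℝ → ℝ → ℝ → Ω → ℝ}
    (hX_meas : ∀ b β, Measurable (Function.uncurry (X b β)))
    (hX : ∀ b, ∀ β < 0,
      IsGaussianProcessOn P (Ici 0) (X b β) (meanVOU E x₀ b β) (covVOU E σ β))
    (hθ : θ.2 < 0)
    (h_mvar : Tendsto (fun θ' : ℝ × ℝ ↦ mvarVOU E σ θ'.2) (𝓝 θ) (𝓝 (mvarVOU E σ θ.2))) :
    TendstoInMeasure P
      (fun (p : ℝ × ℝ × ℝ) ω ↦ empiricalMoments (X p.2.1 p.2.2 · ω) p.1) (atTop ×ˢ 𝓝 θ)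
      (fun _ ↦ stationaryMoments E σ θ) := by
  have h_cov : Tendsto (fun θ' : ℝ × ℝ ↦ ∫ x, covStatVOU E σ θ'.2 0 x) (𝓝 θ)
      (𝓝 (σ ^ 2 * (-θ.2)⁻¹ ^ 2)) := by
    have h_inv := ((continuous_snd.tendsto θ).neg.inv₀ (neg_ne_zero.2 hθ.ne)).pow 2
    refine (h_inv.const_mul (σ ^ 2)).congr' ?_
    filter_upwards [eventually_snd_neg hθ] with θ' hθ'
    exact ((hE _ hθ').integral_covStatVOU hK hθ' σ).symm
  have h_cov_sq := ((h_mvar.const_mul 2).add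
    (((tendsto_bound_meanVOU x₀ hθ).pow 2).const_mul 4)).mul h_cov
  simp_rw [← integral_const_mul] at h_cov_sq
  have h_fst := tendsto_timeAverage_meanVOU hE hK x₀ hθ
  have h_snd := tendsto_timeAverage_meanVOU_sq_add_covVOU hE hK x₀ hθ h_mvar
  have h_dom : ∀ᶠ θ' in 𝓝 θ, CovarianceDominated P (X θ'.1 θ'.2) (meanVOU E x₀ θ'.1 θ'.2)
      (covStatVOU E σ θ'.2 0) := by
    filter_upwards [eventually_snd_neg hθ] with θ' hθ'
    exact (hE _ hθ').covarianceDominated_vou hK hθ' (hX_meas _ _) (hX _ _ hθ')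
  have h_dom_sq : ∀ᶠ θ' in 𝓝 θ, CovarianceDominated P (fun t ω ↦ X θ'.1 θ'.2 t ω ^ 2)
      (fun t ↦ meanVOU E x₀ θ'.1 θ'.2 t ^ 2 + covVOU E σ θ'.2 t t)
      (fun x ↦ (2 * mvarVOU E σ θ'.2 + 4 * (|θ'.1 / -θ'.2| + |x₀ - θ'.1 / -θ'.2|) ^ 2) *
        covStatVOU E σ θ'.2 0 x) := by
    filter_upwards [eventually_snd_neg hθ] with θ' hθ'
    exact (hE _ hθ').covarianceDominated_vou_sq hK hθ' (hX_meas _ _) (hX _ _ hθ')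
  have h_lim_fst := CovarianceDominated.tendstoInMeasure_timeAverage h_dom
    h_cov.isBoundedUnder_le h_fst
  have h_lim_snd := CovarianceDominated.tendstoInMeasure_timeAverage h_dom_sq
    h_cov_sq.isBoundedUnder_le h_snd
  exact tendstoInMeasure_const_prodMk h_lim_fst h_lim_snd

lemma ae_tendsto_empiricalMoments (hE : ∀ β < 0, SolvesResolventEq K β (E β))
    (hK : IsVolterraKernel K) {X : ℝ → Ω → ℝ} (hX_meas : Measurable (Function.uncurry X))
    (hX : IsGaussianProcessOn P (Ici 0) X (meanVOU E x₀ θ.1 θ.2) (covVOU E σ θ.2))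
    (hθ : θ.2 < 0)
    (h_mvar : Tendsto (fun θ' : ℝ × ℝ ↦ mvarVOU E σ θ'.2) (𝓝 θ) (𝓝 (mvarVOU E σ θ.2))) :
    ∀ᵐ ω ∂P, Tendsto (empiricalMoments (X · ω)) atTop (𝓝 (stationaryMoments E σ θ)) := by
  have h_slice : Tendsto (fun T : ℝ ↦ (T, θ)) atTop (atTop ×ˢ 𝓝 θ) :=
    tendsto_id.prodMk tendsto_const_nhds
  have h_dom := (hE _ hθ).covarianceDominated_vou hK hθ hX_meas hX
  have h_dom_sq := (hE _ hθ).covarianceDominated_vou_sq hK hθ hX_meas hX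
  filter_upwards [h_dom.ae_intervalIntegrable, h_dom_sq.ae_intervalIntegrable,
    h_dom.ae_tendsto_timeAverage_nat_sq ((tendsto_timeAverage_meanVOU hE hK x₀ hθ).comp h_slice),
    h_dom_sq.ae_tendsto_timeAverage_nat_sq
      ((tendsto_timeAverage_meanVOU_sq_add_covVOU hE hK x₀ hθ h_mvar).comp h_slice)]
    with ω h_int h_int_sq h_lim h_lim_sq
  exact tendsto_timeAverage_of_nat_sq h_int h_int_sq h_lim h_lim_sq

end EmpiricalMoments

section Estimator

/-- The method-of-moments estimator `(b̂, β̂)` as a function of the first two moments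
`z = (m₁, m₂)`; where `m₂ ≤ m₁²` it takes the junk values of division and `rpow`. -/
def momentEstimator (α σ : ℝ) (z : ℝ × ℝ) : ℝ × ℝ :=
  (z.1 * (Calpha α * σ ^ 2 / (z.2 - z.1 ^ 2)) ^ (α / (2 * α - 1)),
    -(Calpha α * σ ^ 2 / (z.2 - z.1 ^ 2)) ^ (α / (2 * α - 1)))

variable {E : ℝ → ℝ → ℝ} {α x₀ σ : ℝ} {θ : ℝ × ℝ} (hα : α ∈ Ioo (1 / 2) 1) (hσ : 0 < σ)
  (hE : ∀ β < 0, SolvesResolventEq (fractionalKernel α) β (E β))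

include hα in
lemma Calpha_mul_sq_div_rpow {x : ℝ} (hx : 0 < x) (hσ : 0 < σ) :
    (Calpha α * σ ^ 2 / (σ ^ 2 * (Calpha α * x ^ (1 / α - 2)))) ^ (α / (2 * α - 1)) = x := by
  have hα₀ : α ≠ 0 := by linarith [hα.1]
  have hα₁ : 2 * α - 1 ≠ 0 := by linarith [hα.1]
  have hC := Calpha_pos hα
  have h_exp : -(1 / α - 2) = (α / (2 * α - 1))⁻¹ := by
    field_simp
    ring
  have h_div : Calpha α * σ ^ 2 / (σ ^ 2 * (Calpha α * x ^ (1 / α - 2))) =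
      x ^ (α / (2 * α - 1))⁻¹ := by
    rw [← h_exp, Real.rpow_neg hx.le]
    field_simp
  rw [h_div, Real.rpow_inv_rpow hx.le (div_ne_zero hα₀ hα₁)]

include hα hσ hE

lemma momentEstimator_stationaryMoments (hθ : θ.2 < 0) :
    momentEstimator α σ (stationaryMoments E σ θ) = θ := by
  have h_neg : 0 < -θ.2 := neg_pos.2 hθ
  simp only [momentEstimator, stationaryMoments, add_sub_cancel_left, (hE _ hθ).mvarVOU_eq hα hθ,
    Calpha_mul_sq_div_rpow hα h_neg hσ, div_mul_cancel₀ _ h_neg.ne', neg_neg]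

lemma continuousAt_momentEstimator (hθ : θ.2 < 0) :
    ContinuousAt (momentEstimator α σ) (stationaryMoments E σ θ) := by
  have h_neg : 0 < -θ.2 := neg_pos.2 hθ
  have hC := Calpha_pos hα
  have h_var : 0 < (stationaryMoments E σ θ).2 - (stationaryMoments E σ θ).1 ^ 2 := by
    simp only [stationaryMoments, add_sub_cancel_left, (hE _ hθ).mvarVOU_eq hα hθ]
    positivity
  have h_quot : ContinuousAt (fun z : ℝ × ℝ ↦ Calpha α * σ ^ 2 / (z.2 - z.1 ^ 2))
      (stationaryMoments E σ θ) := ContinuousAt.div (by fun_prop) (by fun_prop) h_var.ne'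
  have h_rpow := h_quot.rpow_const (p := α / (2 * α - 1)) (.inl (by positivity))
  exact (continuousAt_fst.mul h_rpow).prodMk h_rpow.neg

variable {Ω : Type*} [MeasurableSpace Ω] {P : Measure Ω} [IsProbabilityMeasure P]

lemma tendstoInMeasure_momentEstimator {X : ℝ → ℝ → ℝ → Ω → ℝ}
    (hX_meas : ∀ b β, Measurable (Function.uncurry (X b β)))
    (hX : ∀ b, ∀ β < 0,
      IsGaussianProcessOn P (Ici 0) (X b β) (meanVOU E x₀ b β) (covVOU E σ β))
    (hθ : θ.2 < 0) :
    TendstoInMeasure P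
      (fun (p : ℝ × ℝ × ℝ) ω ↦ momentEstimator α σ (empiricalMoments (X p.2.1 p.2.2 · ω) p.1))
      (atTop ×ˢ 𝓝 θ) (fun _ ↦ θ) := by
  have h_moments := tendstoInMeasure_empiricalMoments hE (isVolterraKernel_fractionalKernel hα)
    hX_meas hX hθ (tendsto_mvarVOU hE hα σ hθ)
  simpa only [momentEstimator_stationaryMoments hα hσ hE hθ] using
    tendstoInMeasure_const_comp h_moments (continuousAt_momentEstimator hα hσ hE hθ)

lemma ae_tendsto_momentEstimator {X : ℝ → Ω → ℝ} (hX_meas : Measurable (Function.uncurry X))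
    (hX : IsGaussianProcessOn P (Ici 0) X (meanVOU E x₀ θ.1 θ.2) (covVOU E σ θ.2))
    (hθ : θ.2 < 0) :
    ∀ᵐ ω ∂P, Tendsto (fun T ↦ momentEstimator α σ (empiricalMoments (X · ω) T)) atTop (𝓝 θ) := by
  filter_upwards [ae_tendsto_empiricalMoments hE (isVolterraKernel_fractionalKernel hα) hX_meas hX
    hθ (tendsto_mvarVOU hE hα σ hθ)] with ω h_moments
  simpa only [momentEstimator_stationaryMoments hα hσ hE hθ, Function.comp_def] using
    (continuousAt_momentEstimator hα hσ hE hθ).tendsto.comp h_moments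

end Estimator

lemma eventually_forall_measure_lt_of_tendstoInMeasure {ι Ω E : Type*} [MeasurableSpace Ω]
    {P : Measure Ω} [PseudoMetricSpace E] {l : Filter ι} {Θ : Set E} (hΘ : IsCompact Θ)
    {f : ι × E → Ω → E}
    (hf : ∀ θ ∈ Θ, TendstoInMeasure P f (l ×ˢ 𝓝 θ) (fun _ ↦ θ)) {ε : ℝ} (hε : 0 < ε)
    {δ : ℝ≥0∞} (hδ : 0 < δ) :
    ∀ᶠ i in l, ∀ θ ∈ Θ, P {ω | ε < dist (f (i, θ) ω) θ} < δ := by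
  have h_unif : ∀ᶠ p in l ×ˢ 𝓝ˢ Θ, P {ω | ε < dist (f p ω) p.2} < δ := by
    refine hΘ.mem_prod_nhdsSet_of_forall fun θ hθ ↦ ?_
    have h_ball := Metric.ball_mem_nhds θ (half_pos hε)
    filter_upwards [(tendstoInMeasure_const_iff.1 (hf θ hθ) _ h_ball).eventually_lt_const hδ,
      tendsto_snd.eventually h_ball] with p h_lt hp
    refine (measure_mono fun ω hω h_mem ↦ ?_).trans_lt h_lt
    have h_tri := dist_triangle_right (f p ω) p.2 θ
    exact (hω.trans_le h_tri).not_gt (by linarith [Metric.mem_ball.1 hp, Metric.mem_ball.1 h_mem])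
  filter_upwards [h_unif.curry] with i hi θ hθ
  exact subset_of_mem_nhdsSet hi hθ

theorem fractional_VOU_method_of_moments_consistency_general {α x₀ σ : ℝ}
    (hα : α ∈ Ioo (1 / 2) 1) (hσ : 0 < σ) {E : ℝ → ℝ → ℝ}
    (hE : ∀ β < 0, SolvesResolventEq (fractionalKernel α) β (E β))
    {Ω : Type*} [MeasurableSpace Ω] {P : Measure Ω} [IsProbabilityMeasure P]
    {X : ℝ → ℝ → ℝ → Ω → ℝ} (hX_meas : ∀ b β, Measurable (Function.uncurry (X b β)))
    (hX : ∀ b, ∀ β < 0,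
      IsGaussianProcessOn P (Ici 0) (X b β) (meanVOU E x₀ b β) (covVOU E σ β)) :
    (∀ ε > (0 : ℝ), ∀ Θ : Set (ℝ × ℝ), IsCompact Θ → Θ ⊆ univ ×ˢ Iio 0 → ∀ δ > (0 : ℝ),
      ∀ᶠ T in atTop, ∀ θ ∈ Θ,
        P {ω | ε < dist (momentEstimator α σ (empiricalMoments (X θ.1 θ.2 · ω) T)) θ} <
          ENNReal.ofReal δ) ∧
    (∀ b, ∀ β < 0, ∀ᵐ ω ∂P,
      Tendsto (fun T ↦ momentEstimator α σ (empiricalMoments (X b β · ω) T)) atTop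
        (𝓝 (b, β))) := by
  refine ⟨fun ε hε Θ hΘ hΘ_neg δ hδ ↦ ?_, fun b β hβ ↦ ?_⟩
  · exact eventually_forall_measure_lt_of_tendstoInMeasure hΘ
      (fun θ hθ ↦ tendstoInMeasure_momentEstimator hα hσ hE hX_meas hX (hΘ_neg hθ).2) hε
      (ENNReal.ofReal_pos.2 hδ)
  · exact ae_tendsto_momentEstimator (θ := (b, β)) hα hσ hE (hX_meas b β) (hX b β hβ) hβ

/-- Consistency of the method-of-moments estimators for the
fractional Volterra Ornstein–Uhlenbeck process: consistency in probability locally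
uniformly on compacts `Θ ⊂ ℝ × (-∞,0)`, and strong consistency along sequences
`T_n ↗ ∞` with `p`-summable relative gaps. -/
theorem fractional_VOU_method_of_moments_consistency
    (α x₀ σ : ℝ) (hα : α ∈ Set.Ioo (1/2 : ℝ) 1) (hσ : 0 < σ)
    (E : ℝ → ℝ → ℝ)
    (hE : ∀ β < (0:ℝ), SolvesResolventEq (fractionalKernel α) β (E β))
    {Ω : Type*} [MeasurableSpace Ω] (P : Measure Ω) [IsProbabilityMeasure P]
    (X : ℝ → ℝ → ℝ → Ω → ℝ)
    (hXjm : ∀ b β, Measurable (Function.uncurry (X b β)))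
    -- `X` is the (Gaussian) fractional VOU process with parameters `(b,β)`
    (hX : ∀ (b : ℝ), ∀ β < (0:ℝ), IsGaussianProcessOn P (Set.Ici 0) (X b β)
      (meanVOU E x₀ b β) (covVOU E σ β)) :
    -- (i) consistency in probability, locally uniformly in `(b,β)`
    (∀ ε > (0:ℝ), ∀ Θ : Set (ℝ × ℝ), IsCompact Θ → Θ ⊆ Set.univ ×ˢ Set.Iio (0:ℝ) →
      ∀ δ > (0:ℝ), ∃ T₀ : ℝ, ∀ T ≥ T₀, ∀ bβ ∈ Θ,
        P {ω | ε < dist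
            (((1/T) * ∫ t in (0:ℝ)..T, X bβ.1 bβ.2 t ω) *
                (Calpha α * σ ^ 2 /
                  ((1/T) * (∫ t in (0:ℝ)..T, (X bβ.1 bβ.2 t ω) ^ 2) -
                    ((1/T) * ∫ t in (0:ℝ)..T, X bβ.1 bβ.2 t ω) ^ 2)) ^ (α / (2 * α - 1)),
              -(Calpha α * σ ^ 2 /
                  ((1/T) * (∫ t in (0:ℝ)..T, (X bβ.1 bβ.2 t ω) ^ 2) -
                    ((1/T) * ∫ t in (0:ℝ)..T, X bβ.1 bβ.2 t ω) ^ 2)) ^ (α / (2 * α - 1)))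
            bβ} < ENNReal.ofReal δ) ∧
    -- (ii) strong consistency along sequences with `p`-summable relative gaps
    (∀ (b : ℝ), ∀ β < (0:ℝ), ∀ p ≥ (1:ℝ), ∀ T : ℕ → ℝ,
      (∀ n, 0 < T n) → Monotone T → Tendsto T atTop atTop →
      Summable (fun n => |1 - T n / T (n + 1)| ^ p) →
      P {ω | Tendsto (fun n =>
          (((1 / T n) * ∫ t in (0:ℝ)..(T n), X b β t ω) *
              (Calpha α * σ ^ 2 /
                ((1 / T n) * (∫ t in (0:ℝ)..(T n), (X b β t ω) ^ 2) -
                  ((1 / T n) * ∫ t in (0:ℝ)..(T n), X b β t ω) ^ 2)) ^ (α / (2 * α - 1)),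
            -(Calpha α * σ ^ 2 /
                ((1 / T n) * (∫ t in (0:ℝ)..(T n), (X b β t ω) ^ 2) -
                  ((1 / T n) * ∫ t in (0:ℝ)..(T n), X b β t ω) ^ 2)) ^ (α / (2 * α - 1))))
          atTop (nhds (b, β))} = 1) := by
  obtain ⟨h_prob, h_ae⟩ :=
    fractional_VOU_method_of_moments_consistency_general hα hσ hE hXjm hX
  refine ⟨fun ε hε Θ hΘ hΘ_neg δ hδ ↦ eventually_atTop.1 (h_prob ε hε Θ hΘ hΘ_neg δ hδ),
    fun b β hβ _ _ _ _ _ hT _ ↦ ?_⟩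
  exact (measure_congr (eventuallyEq_univ.2 ((h_ae b β hβ).mono fun _ hω ↦ hω.comp hT))).trans
    measure_univ

end
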